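/- Assume hypothesis (H) and that there is a point x₀ ∈ ∂𝔻 with h(x₀) > √(−K(x₀)). Then there exists ε₀ > 0 such that for every ε ∈ (0,ε₀) there exist functions u₀, u₁ ∈ C¹(closed 𝔻) with ∫_{∂𝔻} e^{u₀/2} < 1 < ∫_{∂𝔻} e^{u₁/2} and max{ I_ε(u₀), I_ε(u₁) } < inf{ I_ε(u) : u ∈ C¹(closed 𝔻), ∫_{∂𝔻} e^{u/2} = 1 } (mountain-pass geometry: by continuity of u ↦ ∫_{∂𝔻} e^{u/2}, every continuous path joining u₀ to u₁ crosses the constraint set, on which I_ε strictly exceeds its values at the endpoints). -/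

import Mathlib

open MeasureTheory Real Filter

noncomputable section

/-- The open unit disk in ℝ² ≅ ℂ. -/
def unitDisk : Set ℂ := Metric.ball 0 1

/-- The unit circle ∂𝔻. -/
def unitCircle : Set ℂ := Metric.sphere 0 1

/-- The closed unit disk. -/
def closedUnitDisk : Set ℂ := Metric.closedBall 0 1

/-- Directional derivative of `u` at `x` in direction `v`. -/
def pd (u : ℂ → ℝ) (v x : ℂ) : ℝ := fderiv ℝ u x v

/-- Laplacian of `u` at `x`. -/
def lap (u : ℂ → ℝ) (x : ℂ) : ℝ :=
  fderiv ℝ (fun y => pd u 1 y) x 1 + fderiv ℝ (fun y => pd u Complex.I y) x Complex.I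

/-- Squared norm of the gradient, |∇u|². -/
def gradSq (u : ℂ → ℝ) (x : ℂ) : ℝ := pd u 1 x ^ 2 + pd u Complex.I x ^ 2

/-- Outward normal derivative ∂_ν u(x) = ∇u(x)·x at a boundary point. -/
def nderiv (u : ℂ → ℝ) (x : ℂ) : ℝ := x.re * pd u 1 x + x.im * pd u Complex.I x

/-- Tangential derivative ∂_τ u(x) = ∇u(x)·(−x₂,x₁) at a boundary point. -/
def tderiv (u : ℂ → ℝ) (x : ℂ) : ℝ := -x.im * pd u 1 x + x.re * pd u Complex.I x

/-- Unit-speed parametrization of the unit circle. -/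
def bpt (θ : ℝ) : ℂ := Complex.exp ((θ : ℂ) * Complex.I)

/-- Integral over ∂𝔻 with respect to arclength. -/
def bint (f : ℂ → ℝ) : ℝ := ∫ θ in (0:ℝ)..(2 * π), f (bpt θ)

/-- A solution of the prescribed curvature problem for `(K, h)`. -/
def IsSolution (K h u : ℂ → ℝ) : Prop :=
  ContDiff ℝ 2 u ∧
  (∀ x ∈ unitDisk, -lap u x = 2 * K x * Real.exp (u x)) ∧
  (∀ x ∈ unitCircle, nderiv u x + 2 = 2 * h x * Real.exp (u x / 2))

/-- The auxiliary function Φ = H + √(H² + K). -/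
def Phi (K H : ℂ → ℝ) (x : ℂ) : ℝ := H x + Real.sqrt (H x ^ 2 + K x)

/-- `H` is the harmonic extension of `h`, C¹ up to the boundary. -/
def IsHarmExt (h H : ℂ → ℝ) : Prop :=
  ContDiff ℝ 1 H ∧ ContDiffOn ℝ 2 H unitDisk ∧
  (∀ x ∈ unitDisk, lap H x = 0) ∧ ∀ x ∈ unitCircle, H x = h x

/-- K_ε. -/
def Keps (K : ℂ → ℝ) (ε : ℝ) (x : ℂ) : ℝ := (K x - ε / 2) / (1 + ε)

/-- h_ε. -/
def heps (h : ℂ → ℝ) (ε : ℝ) (x : ℂ) : ℝ := h x / (1 + ε)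

/-- K̃_ε. -/
def Ktil (ε : ℝ) : ℝ := -ε / (2 * (1 + ε))

/-- h̃_ε. -/
def htil (ε : ℝ) : ℝ := 1 / (1 + ε)

/-- A solution of the perturbed problem (P_ε). -/
def IsPerturbedSolution (K h : ℂ → ℝ) (ε : ℝ) (u : ℂ → ℝ) : Prop :=
  ContDiff ℝ 2 u ∧
  (∀ x ∈ unitDisk, -lap u x + 2 * Ktil ε = 2 * Keps K ε x * Real.exp (u x)) ∧
  (∀ x ∈ unitCircle, nderiv u x + 2 * htil ε = 2 * heps h ε x * Real.exp (u x / 2))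

/-- The energy functional I. -/
def Ifun (K h u : ℂ → ℝ) : ℝ :=
  (∫ x in unitDisk, ((1/2) * gradSq u x - 2 * K x * Real.exp (u x))) +
  bint (fun x => 2 * u x - 4 * h x * Real.exp (u x / 2))

/-- The perturbation term T. -/
def Tfun (u : ℂ → ℝ) : ℝ :=
  ∫ x in unitDisk, ((1/2) * gradSq u x + Real.exp (u x) - u x)

/-- The perturbed functional I_ε. -/
def Ieps (K h : ℂ → ℝ) (ε : ℝ) (u : ℂ → ℝ) : ℝ := (Ifun K h u + ε * Tfun u) / (1 + ε)

/-!
The sharp Lebedev–Milin inequality `log (⨍ e^v) ≤ ⨍ v + (4π)⁻¹ ∫ |∇v|²` (`⨍` is the average over the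
circle, `∫` the integral over the disk), applied to `v = u / 2`, bounds `I` from below on the
constraint set: since `K ≤ 0`, only the boundary term with `h` could hurt, and the constraint
bounds it. On the other hand `I` tends to `-∞` along the constants `c → -∞`, where the boundary
integral of `e^{u/2}` tends to `0`, and along `u = 2 log (α / (1 + δ - ⟪x₀, x⟫))` as `δ → 0`, where
that integral tends to `∞`. Along the latter, gradient, curvature and boundary terms are all
comparable to `∫_∂𝔻 e^{u/2}`, and `h x₀ > √(-K x₀)` makes their total coefficient negative for
`α = 1 / h x₀`. Both endpoints are fixed before `ε`, so a small perturbation preserves the strict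
inequality; it can only raise the energy on the constraint set because `T ≥ 0`.

For `v = 2 Re P` with `P` a polynomial, `exp P` is compared coefficientwise with `exp Q`, where the
coefficients of `Q'` are the squared moduli of those of `P'`; a general `v` is approximated by its
Fourier polynomials, whose Dirichlet energy is at most that of `v`.
-/

/-! ### The unit circle and the unit disk -/

lemma bpt_eq_circleMap : bpt = circleMap 0 1 := by
  funext θ
  simp [bpt, circleMap]

lemma contDiff_bpt {n : WithTop ℕ∞} : ContDiff ℝ n bpt :=
  bpt_eq_circleMap ▸ contDiff_circleMap 0 1

@[fun_prop]
lemma continuous_bpt : Continuous bpt :=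
  bpt_eq_circleMap ▸ continuous_circleMap 0 1

lemma hasDerivAt_bpt (θ : ℝ) : HasDerivAt bpt (bpt θ * Complex.I) θ :=
  bpt_eq_circleMap ▸ hasDerivAt_circleMap 0 1 θ

lemma periodic_bpt : Function.Periodic bpt (2 * π) :=
  bpt_eq_circleMap ▸ periodic_circleMap 0 1

lemma norm_bpt (θ : ℝ) : ‖bpt θ‖ = 1 :=
  Complex.norm_exp_ofReal_mul_I θ

lemma bpt_re (θ : ℝ) : (bpt θ).re = cos θ :=
  Complex.exp_ofReal_mul_I_re θ

lemma bpt_im (θ : ℝ) : (bpt θ).im = sin θ :=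
  Complex.exp_ofReal_mul_I_im θ

lemma bpt_mem_unitCircle (θ : ℝ) : bpt θ ∈ unitCircle :=
  mem_sphere_zero_iff_norm.2 (norm_bpt θ)

lemma bpt_add (s t : ℝ) : bpt (s + t) = bpt s * bpt t := by
  simp only [bpt, Complex.ofReal_add, add_mul, Complex.exp_add]

lemma bpt_arg {x : ℂ} (hx : x ∈ unitCircle) : bpt x.arg = x := by
  simpa [bpt, mem_sphere_zero_iff_norm.1 hx] using Complex.norm_mul_exp_arg_mul_I x

lemma unitCircle_subset_closedUnitDisk : unitCircle ⊆ closedUnitDisk :=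
  Metric.sphere_subset_closedBall

lemma unitDisk_subset_closedUnitDisk : unitDisk ⊆ closedUnitDisk :=
  Metric.ball_subset_closedBall

lemma isCompact_unitCircle : IsCompact unitCircle :=
  isCompact_sphere 0 1

lemma isCompact_closedUnitDisk : IsCompact closedUnitDisk :=
  isCompact_closedBall 0 1

lemma isOpen_unitDisk : IsOpen unitDisk :=
  Metric.isOpen_ball

section ContinuousOn

variable {f g : ℂ → ℝ}

lemma continuous_comp_bpt {E : Type*} [TopologicalSpace E] {f : ℂ → E}
    (hf : ContinuousOn f unitCircle) : Continuous fun θ ↦ f (bpt θ) :=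
  hf.comp_continuous continuous_bpt bpt_mem_unitCircle

lemma continuousOn_unitCircle_of_comp_bpt (hf : Continuous fun θ ↦ f (bpt θ)) :
    ContinuousOn f unitCircle := by
  intro x₀ hx₀
  obtain ⟨θ₀, rfl⟩ : ∃ θ₀, bpt θ₀ = x₀ := ⟨x₀.arg, bpt_arg hx₀⟩
  -- Near `bpt θ₀` the map `x ↦ θ₀ + arg (x / bpt θ₀)` is a continuous inverse of `bpt`.
  have bpt_ne_zero : bpt θ₀ ≠ 0 := Complex.exp_ne_zero _
  have continuousAt_angle : ContinuousAt (fun x : ℂ ↦ θ₀ + (x / bpt θ₀).arg) (bpt θ₀) := by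
    have continuousAt_arg : ContinuousAt Complex.arg (bpt θ₀ / bpt θ₀) := by
      rw [div_self bpt_ne_zero]
      exact Complex.continuousAt_arg Complex.one_mem_slitPlane
    exact continuousAt_const.add (continuousAt_arg.comp (f := (· / bpt θ₀)) (by fun_prop))
  refine (hf.continuousAt.comp continuousAt_angle).continuousWithinAt.congr_of_mem
    (fun x hx ↦ ?_) hx₀
  have quotient_mem : x / bpt θ₀ ∈ unitCircle := by
    rw [unitCircle, mem_sphere_zero_iff_norm, norm_div, norm_bpt, mem_sphere_zero_iff_norm.1 hx,
      div_one]
  have bpt_angle : bpt (θ₀ + (x / bpt θ₀).arg) = x := by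
    rw [bpt_add, bpt_arg quotient_mem, mul_div_cancel₀ _ bpt_ne_zero]
  simp only [Function.comp_apply, bpt_angle]

lemma bint_congr (h : Set.EqOn f g unitCircle) : bint f = bint g :=
  intervalIntegral.integral_congr fun θ _ ↦ h (bpt_mem_unitCircle θ)

lemma bint_mono (hf : ContinuousOn f unitCircle) (hg : ContinuousOn g unitCircle)
    (h : ∀ x ∈ unitCircle, f x ≤ g x) : bint f ≤ bint g :=
  intervalIntegral.integral_mono two_pi_pos.le
    (continuous_comp_bpt hf |>.intervalIntegrable _ _)
    (continuous_comp_bpt hg |>.intervalIntegrable _ _)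
    fun θ ↦ h _ (bpt_mem_unitCircle θ)

lemma bint_add (hf : ContinuousOn f unitCircle) (hg : ContinuousOn g unitCircle) :
    bint (fun x ↦ f x + g x) = bint f + bint g :=
  intervalIntegral.integral_add (continuous_comp_bpt hf |>.intervalIntegrable _ _)
    (continuous_comp_bpt hg |>.intervalIntegrable _ _)

lemma bint_sub (hf : ContinuousOn f unitCircle) (hg : ContinuousOn g unitCircle) :
    bint (fun x ↦ f x - g x) = bint f - bint g :=
  intervalIntegral.integral_sub (continuous_comp_bpt hf |>.intervalIntegrable _ _)
    (continuous_comp_bpt hg |>.intervalIntegrable _ _)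

lemma bint_const_mul (c : ℝ) (f : ℂ → ℝ) : bint (fun x ↦ c * f x) = c * bint f :=
  intervalIntegral.integral_const_mul _ _

lemma bint_const (c : ℝ) : bint (fun _ ↦ c) = 2 * π * c := by
  simp [bint]

lemma bint_eq_integral_shift (f : ℂ → ℝ) (a : ℝ) :
    bint f = ∫ θ in a..a + 2 * π, f (bpt θ) := by
  have periodic : Function.Periodic (fun θ ↦ f (bpt θ)) (2 * π) := periodic_bpt.comp f
  simpa [bint] using periodic.intervalIntegral_add_eq 0 a

lemma integrableOn_unitDisk (hf : ContinuousOn f closedUnitDisk) : IntegrableOn f unitDisk :=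
  (hf.integrableOn_compact isCompact_closedUnitDisk).mono_set unitDisk_subset_closedUnitDisk

end ContinuousOn

lemma continuous_pd {u : ℂ → ℝ} (hu : ContDiff ℝ 1 u) (v : ℂ) : Continuous (pd u v) :=
  (hu.continuous_fderiv one_ne_zero).clm_apply continuous_const

lemma continuous_gradSq {u : ℂ → ℝ} (hu : ContDiff ℝ 1 u) : Continuous (gradSq u) :=
  ((continuous_pd hu 1).pow 2).add ((continuous_pd hu Complex.I).pow 2)

lemma gradSq_nonneg (u : ℂ → ℝ) (x : ℂ) : 0 ≤ gradSq u x := by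
  unfold gradSq
  positivity

lemma fderiv_apply_eq_pd (u : ℂ → ℝ) (x v : ℂ) :
    fderiv ℝ u x v = v.re * pd u 1 x + v.im * pd u Complex.I x := by
  have decomposition : v = v.re • (1 : ℂ) + v.im • Complex.I := by simp [Complex.re_add_im]
  calc fderiv ℝ u x v = fderiv ℝ u x (v.re • (1 : ℂ) + v.im • Complex.I) := by rw [← decomposition]
    _ = v.re * pd u 1 x + v.im * pd u Complex.I x := by
      rw [map_add, map_smul, map_smul, smul_eq_mul, smul_eq_mul, pd, pd]

lemma pd_const_mul {u : ℂ → ℝ} {x : ℂ} (hu : DifferentiableAt ℝ u x) (c : ℝ) (a : ℂ) :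
    pd (fun x ↦ c * u x) a x = c * pd u a x := by
  simp only [pd, fderiv_const_mul hu]
  rfl

/-! ### The divergence theorem on the disk -/

lemma integral_unitDisk_eq_integral_polar (f : ℂ → ℝ) :
    ∫ x in unitDisk, f x =
      ∫ p in Set.Icc ((0, -π) : ℝ × ℝ) (1, π), p.1 * f (p.1 * bpt p.2) := by
  have polar_eq : ∀ p : ℝ × ℝ, Complex.polarCoord.symm p = p.1 * bpt p.2 := fun p ↦ by
    rw [Complex.polarCoord_symm_apply, bpt, Complex.exp_mul_I]
    push_cast
    rfl
  have polar_mem : ∀ p ∈ polarCoord.target, p.1 * bpt p.2 ∈ unitDisk ↔ p.1 < 1 := fun p hp ↦ by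
    rw [unitDisk, mem_ball_zero_iff, norm_mul, norm_bpt, mul_one,
      Complex.norm_of_nonneg (le_of_lt hp.1)]
  have rectangle_ae_eq :
      Set.Ioo (0 : ℝ) 1 ×ˢ Set.Ioo (-π) π =ᵐ[volume] Set.Icc ((0, -π) : ℝ × ℝ) (1, π) := by
    rw [Set.Icc_prod_eq]
    exact Measure.set_prod_ae_eq Ioo_ae_eq_Icc Ioo_ae_eq_Icc
  rw [← integral_indicator isOpen_unitDisk.measurableSet, ← Complex.integral_comp_polarCoord_symm,
    ← setIntegral_congr_set rectangle_ae_eq,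
    ← integral_indicator (measurableSet_Ioo.prod measurableSet_Ioo),
    ← integral_indicator polarCoord.open_target.measurableSet]
  congr 1
  funext p
  by_cases hp : p ∈ polarCoord.target
  · by_cases hp1 : p.1 < 1
    · have mem_rectangle : p ∈ Set.Ioo (0 : ℝ) 1 ×ˢ Set.Ioo (-π) π := ⟨⟨hp.1, hp1⟩, hp.2⟩
      rw [Set.indicator_of_mem hp, Set.indicator_of_mem mem_rectangle, polar_eq,
        Set.indicator_of_mem ((polar_mem p hp).2 hp1), smul_eq_mul]
    · have notMem_rectangle : p ∉ Set.Ioo (0 : ℝ) 1 ×ˢ Set.Ioo (-π) π := fun h ↦ hp1 h.1.2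
      rw [Set.indicator_of_mem hp, Set.indicator_of_notMem notMem_rectangle, polar_eq,
        Set.indicator_of_notMem (mt (polar_mem p hp).1 hp1), smul_zero]
  · have notMem_rectangle : p ∉ Set.Ioo (0 : ℝ) 1 ×ˢ Set.Ioo (-π) π := fun h ↦ hp ⟨h.1.1, h.2⟩
    rw [Set.indicator_of_notMem hp, Set.indicator_of_notMem notMem_rectangle]

lemma hasDerivAt_comp_mul_bpt_radial {F : ℂ → ℝ} (hF : Differentiable ℝ F) (r θ : ℝ) :
    HasDerivAt (fun s : ℝ ↦ F (s * bpt θ))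
      (cos θ * pd F 1 (r * bpt θ) + sin θ * pd F Complex.I (r * bpt θ)) r := by
  have hasDerivAt_ray : HasDerivAt (fun s : ℝ ↦ (s : ℂ) * bpt θ) (bpt θ) r := by
    simpa using (Complex.ofRealCLM.hasDerivAt (x := r)).mul_const (bpt θ)
  refine ((hF (r * bpt θ)).hasFDerivAt.comp_hasDerivAt r hasDerivAt_ray).congr_deriv ?_
  rw [fderiv_apply_eq_pd, bpt_re, bpt_im]

lemma hasDerivAt_comp_mul_bpt_angular {F : ℂ → ℝ} (hF : Differentiable ℝ F) (r θ : ℝ) :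
    HasDerivAt (fun t : ℝ ↦ F (r * bpt t))
      (r * (-sin θ * pd F 1 (r * bpt θ) + cos θ * pd F Complex.I (r * bpt θ))) θ := by
  refine ((hF (r * bpt θ)).hasFDerivAt.comp_hasDerivAt θ
    ((hasDerivAt_bpt θ).const_mul (r : ℂ))).congr_deriv ?_
  rw [fderiv_apply_eq_pd]
  simp only [Complex.mul_re, Complex.mul_im, bpt_re, bpt_im, Complex.ofReal_re, Complex.ofReal_im,
    Complex.I_re, Complex.I_im]
  ring

/-- The radial component of the planar vector field `(F, G)` at the point with polar coordinates
`p = (r, θ)`, multiplied by the polar Jacobian `r`. -/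
def radialFlux (F G : ℂ → ℝ) (p : ℝ × ℝ) : ℝ :=
  p.1 * (cos p.2 * F (p.1 * bpt p.2) + sin p.2 * G (p.1 * bpt p.2))

/-- The angular component of the planar vector field `(F, G)` at the point with polar coordinates
`p = (r, θ)`. -/
def angularFlux (F G : ℂ → ℝ) (p : ℝ × ℝ) : ℝ :=
  -sin p.2 * F (p.1 * bpt p.2) + cos p.2 * G (p.1 * bpt p.2)

section Divergence

variable {F G : ℂ → ℝ}

lemma contDiff_comp_polar (hF : ContDiff ℝ 1 F) :
    ContDiff ℝ 1 fun p : ℝ × ℝ ↦ F (p.1 * bpt p.2) :=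
  hF.comp <| (Complex.ofRealCLM.contDiff.comp contDiff_fst).mul (contDiff_bpt.comp contDiff_snd)

lemma contDiff_radialFlux (hF : ContDiff ℝ 1 F) (hG : ContDiff ℝ 1 G) :
    ContDiff ℝ 1 (radialFlux F G) :=
  contDiff_fst.mul <| (contDiff_snd.cos.mul (contDiff_comp_polar hF)).add
    (contDiff_snd.sin.mul (contDiff_comp_polar hG))

lemma contDiff_angularFlux (hF : ContDiff ℝ 1 F) (hG : ContDiff ℝ 1 G) :
    ContDiff ℝ 1 (angularFlux F G) :=
  (contDiff_snd.sin.neg.mul (contDiff_comp_polar hF)).add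
    (contDiff_snd.cos.mul (contDiff_comp_polar hG))

lemma fderiv_radialFlux_add_fderiv_angularFlux (hF : ContDiff ℝ 1 F) (hG : ContDiff ℝ 1 G)
    (p : ℝ × ℝ) :
    fderiv ℝ (radialFlux F G) p (1, 0) + fderiv ℝ (angularFlux F G) p (0, 1) =
      p.1 * (pd F 1 (p.1 * bpt p.2) + pd G Complex.I (p.1 * bpt p.2)) := by
  obtain ⟨r, θ⟩ := p
  have hF' := hF.differentiable one_ne_zero
  have hG' := hG.differentiable one_ne_zero
  have radial : HasDerivAt (fun s ↦ radialFlux F G (s, θ))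
      (fderiv ℝ (radialFlux F G) (r, θ) (1, 0)) r :=
    ((contDiff_radialFlux hF hG).differentiable one_ne_zero (r, θ)).hasFDerivAt.comp_hasDerivAt r
      (f := fun s ↦ (s, θ)) ((hasDerivAt_id' r).prodMk (hasDerivAt_const r θ))
  have angular : HasDerivAt (fun t ↦ angularFlux F G (r, t))
      (fderiv ℝ (angularFlux F G) (r, θ) (0, 1)) θ :=
    ((contDiff_angularFlux hF hG).differentiable one_ne_zero (r, θ)).hasFDerivAt.comp_hasDerivAt θ
      (f := fun t ↦ (r, t)) ((hasDerivAt_const θ r).prodMk (hasDerivAt_id' θ))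
  have radial_eq := radial.unique <| (hasDerivAt_id' r).fun_mul <|
    ((hasDerivAt_comp_mul_bpt_radial hF' r θ).const_mul (cos θ)).fun_add
      ((hasDerivAt_comp_mul_bpt_radial hG' r θ).const_mul (sin θ))
  have angular_eq := angular.unique <|
    ((hasDerivAt_sin θ).fun_neg.fun_mul (hasDerivAt_comp_mul_bpt_angular hF' r θ)).fun_add
      ((hasDerivAt_cos θ).fun_mul (hasDerivAt_comp_mul_bpt_angular hG' r θ))
  rw [radial_eq, angular_eq]
  linear_combination
    r * (pd F 1 (r * bpt θ) + pd G Complex.I (r * bpt θ)) * sin_sq_add_cos_sq θ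

theorem integral_divergence_unitDisk (hF : ContDiff ℝ 1 F) (hG : ContDiff ℝ 1 G) :
    ∫ x in unitDisk, (pd F 1 x + pd G Complex.I x) = bint fun x ↦ x.re * F x + x.im * G x := by
  have radial := contDiff_radialFlux hF hG
  have angular := contDiff_angularFlux hF hG
  have continuous_divergence : Continuous fun p ↦
      fderiv ℝ (radialFlux F G) p (1, 0) + fderiv ℝ (angularFlux F G) p (0, 1) :=
    ((radial.continuous_fderiv one_ne_zero).clm_apply continuous_const).add
      ((angular.continuous_fderiv one_ne_zero).clm_apply continuous_const)
  have rectangle := integral_divergence_prod_Icc_of_hasFDerivAt_of_le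
    (radialFlux F G) (angularFlux F G) _ _ (0, -π) (1, π)
    (Prod.mk_le_mk.2 ⟨zero_le_one, by linarith [pi_pos]⟩)
    radial.continuous.continuousOn angular.continuous.continuousOn
    (fun p _ ↦ (radial.differentiable one_ne_zero p).hasFDerivAt)
    (fun p _ ↦ (angular.differentiable one_ne_zero p).hasFDerivAt)
    (continuous_divergence.continuousOn.integrableOn_compact isCompact_Icc)
  have bpt_neg_pi : bpt (-π) = bpt π := by
    rw [← periodic_bpt (-π)]
    ring_nf
  have outer_edge :
      ∫ θ in -π..π, radialFlux F G (1, θ) = bint fun x ↦ x.re * F x + x.im * G x := by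
    rw [bint_eq_integral_shift _ (-π), show -π + 2 * π = π by ring]
    simp only [radialFlux, one_mul, Complex.ofReal_one, bpt_re, bpt_im]
  simp only [fderiv_radialFlux_add_fderiv_angularFlux hF hG] at rectangle
  rw [integral_unitDisk_eq_integral_polar, rectangle, outer_edge]
  simp [radialFlux, angularFlux, bpt_neg_pi]

end Divergence

/-! ### The Lebedev–Milin inequality for polynomials -/

open Finset.HasAntidiagonal (antidiagonal)

-- The recursions say that `∑ bₙ zⁿ` and `∑ βₙ zⁿ` are exponentials of power series whose
-- derivatives have coefficients `cₙ` and `‖cₙ‖²`.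
lemma sq_norm_le_of_exp_recursion {𝕜 : Type*} [RCLike 𝕜] {b c : ℕ → 𝕜} {β : ℕ → ℝ}
    (h0 : ‖b 0‖ ^ 2 ≤ β 0)
    (hb : ∀ n : ℕ, (n + 1) * b (n + 1) = ∑ p ∈ antidiagonal n, c p.1 * b p.2)
    (hβ : ∀ n : ℕ, (n + 1) * β (n + 1) = ∑ p ∈ antidiagonal n, ‖c p.1‖ ^ 2 * β p.2) (n : ℕ) :
    ‖b n‖ ^ 2 ≤ β n := by
  induction n using Nat.strong_induction_on with
  | _ n ih =>
  rcases n with _ | n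
  · exact h0
  have n_succ_pos : (0 : ℝ) < n + 1 := by positivity
  have norm_recursion :
      (n + 1) * ‖b (n + 1)‖ ≤ ∑ p ∈ antidiagonal n, ‖c p.1‖ * ‖b p.2‖ := by
    have norm_n_succ : ‖(n + 1 : 𝕜)‖ = n + 1 := by
      exact_mod_cast RCLike.norm_natCast (K := 𝕜) (n + 1)
    calc (n + 1) * ‖b (n + 1)‖ = ‖∑ p ∈ antidiagonal n, c p.1 * b p.2‖ := by
          rw [← hb, norm_mul, norm_n_succ]
      _ ≤ _ := norm_sum_le_of_le _ fun p _ ↦ (norm_mul _ _).le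
  refine le_of_mul_le_mul_left ?_ (sq_pos_of_pos n_succ_pos)
  calc (n + 1 : ℝ) ^ 2 * ‖b (n + 1)‖ ^ 2 = ((n + 1) * ‖b (n + 1)‖) ^ 2 := by ring
    _ ≤ (∑ p ∈ antidiagonal n, ‖c p.1‖ * ‖b p.2‖) ^ 2 := by gcongr
    _ ≤ (n + 1) * ∑ p ∈ antidiagonal n, (‖c p.1‖ * ‖b p.2‖) ^ 2 := by
      simpa using sq_sum_le_card_mul_sum_sq (s := antidiagonal n)
        (f := fun p ↦ ‖c p.1‖ * ‖b p.2‖)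
    _ ≤ (n + 1) * ∑ p ∈ antidiagonal n, ‖c p.1‖ ^ 2 * β p.2 := by
      gcongr with p hp
      rw [mul_pow]
      gcongr
      exact ih _ (Nat.lt_succ_of_le (Finset.HasAntidiagonal.antidiagonal.snd_le hp))
    _ = (n + 1) ^ 2 * β (n + 1) := by
      rw [← hβ]
      ring

/-- The `n`-th Taylor coefficient at `0` of a function `f : ℂ → ℂ`. -/
def taylorCoeff (f : ℂ → ℂ) (n : ℕ) : ℂ :=
  iteratedDeriv n f 0 / n.factorial

lemma taylorCoeff_zero (f : ℂ → ℂ) : taylorCoeff f 0 = f 0 := by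
  simp [taylorCoeff]

lemma taylorCoeff_deriv (f : ℂ → ℂ) (n : ℕ) :
    taylorCoeff (deriv f) n = (n + 1) * taylorCoeff f (n + 1) := by
  have n_succ_ne_zero : (n + 1 : ℂ) ≠ 0 := by exact_mod_cast n.succ_ne_zero
  rw [taylorCoeff, taylorCoeff, iteratedDeriv_succ', Nat.factorial_succ]
  push_cast
  field_simp

lemma taylorCoeff_mul {f g : ℂ → ℂ} (hf : Differentiable ℂ f) (hg : Differentiable ℂ g) (n : ℕ) :
    taylorCoeff (fun z ↦ f z * g z) n =
      ∑ p ∈ antidiagonal n, taylorCoeff f p.1 * taylorCoeff g p.2 := by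
  have leibniz := iteratedDeriv_fun_mul (hf.contDiff (n := n)).contDiffAt
    (hg.contDiff (n := n)).contDiffAt (x := 0)
  rw [taylorCoeff, leibniz, Finset.sum_div,
    Finset.Nat.sum_antidiagonal_eq_sum_range_succ fun i j ↦ taylorCoeff f i * taylorCoeff g j]
  refine Finset.sum_congr rfl fun i hi ↦ ?_
  have n_factorial_ne_zero : (n.factorial : ℂ) ≠ 0 := mod_cast n.factorial_ne_zero
  have choose_eq := Nat.cast_choose ℂ (Nat.lt_succ_iff.1 (Finset.mem_range.1 hi))
  rw [choose_eq, taylorCoeff, taylorCoeff]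
  field_simp

lemma taylorCoeff_polynomial_eval (P : Polynomial ℂ) (n : ℕ) :
    taylorCoeff (fun z ↦ P.eval z) n = P.coeff n := by
  induction n generalizing P with
  | zero => rw [taylorCoeff_zero, Polynomial.coeff_zero_eq_eval_zero]
  | succ n ih =>
    have n_succ_ne_zero : (n + 1 : ℂ) ≠ 0 := by exact_mod_cast n.succ_ne_zero
    have deriv_eval : deriv (fun z ↦ P.eval z) = fun z ↦ P.derivative.eval z :=
      funext fun _ ↦ P.deriv
    refine mul_left_cancel₀ n_succ_ne_zero ?_
    rw [← taylorCoeff_deriv, deriv_eval, ih, Polynomial.coeff_derivative, mul_comm]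

lemma hasSum_taylorCoeff {f : ℂ → ℂ} (hf : Differentiable ℂ f) (z : ℂ) :
    HasSum (fun n ↦ taylorCoeff f n * z ^ n) (f z) := by
  refine (Complex.hasSum_taylorSeries_of_entire hf 0 z).congr_fun fun n ↦ ?_
  rw [taylorCoeff, sub_zero, smul_eq_mul, smul_eq_mul]
  ring

section Exp

variable (P : Polynomial ℂ)

lemma differentiable_cexp_eval : Differentiable ℂ fun z ↦ Complex.exp (P.eval z) :=
  P.differentiable.cexp

lemma taylorCoeff_cexp_eval_succ (n : ℕ) :
    (n + 1) * taylorCoeff (fun z ↦ Complex.exp (P.eval z)) (n + 1) =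
      ∑ p ∈ antidiagonal n,
        P.derivative.coeff p.1 * taylorCoeff (fun z ↦ Complex.exp (P.eval z)) p.2 := by
  have deriv_exp : deriv (fun z ↦ Complex.exp (P.eval z)) =
      fun z ↦ P.derivative.eval z * Complex.exp (P.eval z) := by
    funext z
    rw [(P.hasDerivAt z).cexp.deriv, mul_comm]
  simp only [← taylorCoeff_deriv, deriv_exp, ← taylorCoeff_polynomial_eval,
    taylorCoeff_mul P.derivative.differentiable (differentiable_cexp_eval P)]

/-- The Dirichlet energy `∑ k |aₖ|²` of the polynomial `∑ aₖ zᵏ`, which is `π⁻¹` times the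
Dirichlet integral of its real part over the unit disk. -/
def polynomialEnergy : ℝ :=
  P.sum fun k a ↦ k * ‖a‖ ^ 2

/-- The polynomial whose exponential majorizes `|exp P|²` coefficientwise: its derivative has
coefficients `|cₙ|²`, where the `cₙ` are the coefficients of the derivative of `P`. -/
def sqMajorant : Polynomial ℂ :=
  Polynomial.C ((2 * (P.coeff 0).re : ℝ) : ℂ) +
    P.sum fun k a ↦ Polynomial.monomial k ((k * ‖a‖ ^ 2 : ℝ) : ℂ)

lemma eval_sqMajorant_zero : (sqMajorant P).eval 0 = (2 * (P.coeff 0).re : ℝ) := by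
  simp [sqMajorant, Polynomial.sum_def, Polynomial.eval_finsetSum, Polynomial.eval_monomial,
    zero_pow_eq]

lemma eval_sqMajorant_one :
    (sqMajorant P).eval 1 = (2 * (P.coeff 0).re + polynomialEnergy P : ℝ) := by
  simp [sqMajorant, polynomialEnergy, Polynomial.sum_def, Polynomial.eval_finsetSum,
    Polynomial.eval_monomial]

lemma coeff_sqMajorant_succ (n : ℕ) :
    (sqMajorant P).coeff (n + 1) = ((n + 1) * ‖P.coeff (n + 1)‖ ^ 2 : ℝ) := by
  by_cases hn : P.coeff (n + 1) = 0 <;>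
    simp [sqMajorant, Polynomial.sum_def, Polynomial.coeff_monomial, hn]

lemma coeff_derivative_sqMajorant (n : ℕ) :
    (sqMajorant P).derivative.coeff n = (‖P.derivative.coeff n‖ ^ 2 : ℝ) := by
  have norm_n_succ : ‖(n + 1 : ℂ)‖ = n + 1 := by exact_mod_cast Complex.norm_natCast (n + 1)
  rw [Polynomial.coeff_derivative, Polynomial.coeff_derivative, coeff_sqMajorant_succ, norm_mul,
    norm_n_succ]
  push_cast
  ring

theorem sum_sq_norm_taylorCoeff_cexp_le (M : ℕ) :
    ∑ n ∈ Finset.range M, ‖taylorCoeff (fun z ↦ Complex.exp (P.eval z)) n‖ ^ 2 ≤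
      exp (2 * (P.coeff 0).re + polynomialEnergy P) := by
  set Q := sqMajorant P
  set β : ℕ → ℝ := fun n ↦ (taylorCoeff (fun z ↦ Complex.exp (Q.eval z)) n).re
  have initial : ‖taylorCoeff (fun z ↦ Complex.exp (P.eval z)) 0‖ ^ 2 ≤ β 0 := by
    simp only [β, taylorCoeff_zero, Q, eval_sqMajorant_zero, Complex.norm_exp,
      Polynomial.coeff_zero_eq_eval_zero, Complex.exp_ofReal_re, ← Real.exp_nat_mul]
    norm_num
  have recursion (n : ℕ) : (n + 1) * β (n + 1) =
      ∑ p ∈ antidiagonal n, ‖P.derivative.coeff p.1‖ ^ 2 * β p.2 := by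
    have := congrArg Complex.re (taylorCoeff_cexp_eval_succ Q n)
    simp only [Q, coeff_derivative_sqMajorant, Complex.re_sum, Complex.re_ofReal_mul] at this
    rw [← this]
    exact_mod_cast (Complex.re_ofReal_mul ((n : ℝ) + 1) _).symm
  have coeff_le := sq_norm_le_of_exp_recursion initial (taylorCoeff_cexp_eval_succ P) recursion
  have hasSum_majorant : HasSum β (exp (2 * (P.coeff 0).re + polynomialEnergy P)) := by
    simpa only [one_pow, mul_one, Q, eval_sqMajorant_one, Complex.exp_ofReal_re] using
      Complex.hasSum_re (hasSum_taylorCoeff (differentiable_cexp_eval Q) 1)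
  calc _ ≤ ∑ n ∈ Finset.range M, β n := Finset.sum_le_sum fun n _ ↦ coeff_le n
    _ ≤ _ := sum_le_hasSum _ (fun n _ ↦ (sq_nonneg _).trans (coeff_le n)) hasSum_majorant

end Exp

lemma bint_sq_norm_polynomial_eval (P : Polynomial ℂ) :
    bint (fun z ↦ ‖P.eval z‖ ^ 2) = 2 * π * ∑ i ∈ P.support, ‖P.coeff i‖ ^ 2 := by
  rw [P.sum_sq_norm_coeff_eq_circleAverage, circleAverage_def, ← bpt_eq_circleMap, smul_eq_mul,
    mul_inv_cancel_left₀ two_pi_pos.ne', bint]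

/-- The Taylor polynomial at `0` of `f` with `M` terms, that is, of degree less than `M`. -/
def taylorPolynomial (f : ℂ → ℂ) (M : ℕ) : Polynomial ℂ :=
  ∑ n ∈ Finset.range M, Polynomial.monomial n (taylorCoeff f n)

lemma eval_taylorPolynomial (f : ℂ → ℂ) (M : ℕ) (z : ℂ) :
    (taylorPolynomial f M).eval z = ∑ n ∈ Finset.range M, taylorCoeff f n * z ^ n := by
  simp [taylorPolynomial, Polynomial.eval_finsetSum, Polynomial.eval_monomial]

lemma coeff_taylorPolynomial (f : ℂ → ℂ) (M n : ℕ) :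
    (taylorPolynomial f M).coeff n = if n < M then taylorCoeff f n else 0 := by
  simp [taylorPolynomial, Polynomial.coeff_monomial]

lemma bint_sq_norm_taylorPolynomial_le (f : ℂ → ℂ) (M : ℕ) :
    bint (fun z ↦ ‖(taylorPolynomial f M).eval z‖ ^ 2) ≤
      2 * π * ∑ n ∈ Finset.range M, ‖taylorCoeff f n‖ ^ 2 := by
  rw [bint_sq_norm_polynomial_eval]
  gcongr
  refine (Finset.sum_le_sum_of_subset_of_nonneg (t := Finset.range M) (fun n hn ↦ ?_)
    fun n _ _ ↦ sq_nonneg _).trans_eq (Finset.sum_congr rfl fun n hn ↦ ?_)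
  · by_contra hnM
    simp_all [coeff_taylorPolynomial]
  · rw [coeff_taylorPolynomial, if_pos (Finset.mem_range.1 hn)]

lemma tendsto_bint_sq_norm_taylorPolynomial {f : ℂ → ℂ} (hf : Differentiable ℂ f) :
    Tendsto (fun M ↦ bint fun z ↦ ‖(taylorPolynomial f M).eval z‖ ^ 2) atTop
      (nhds (bint fun z ↦ ‖f z‖ ^ 2)) := by
  have summable_norm : Summable fun n ↦ ‖taylorCoeff f n‖ := by
    simpa using (hasSum_taylorCoeff hf 1).summable.norm
  have norm_eval_le (M : ℕ) (θ : ℝ) :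
      ‖(taylorPolynomial f M).eval (bpt θ)‖ ≤ ∑' n, ‖taylorCoeff f n‖ := by
    rw [eval_taylorPolynomial]
    refine (norm_sum_le_of_le _ fun n _ ↦ ?_).trans
      (summable_norm.sum_le_tsum (Finset.range M) fun n _ ↦ norm_nonneg _)
    simp [norm_bpt]
  refine intervalIntegral.tendsto_integral_filter_of_dominated_convergence
    (fun _ ↦ (∑' n, ‖taylorCoeff f n‖) ^ 2) (.of_forall fun M ↦ ?_) (.of_forall fun M ↦ ?_)
    intervalIntegrable_const (.of_forall fun θ _ ↦ ?_)
  · exact Continuous.aestronglyMeasurable (by fun_prop)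
  · refine .of_forall fun θ _ ↦ ?_
    rw [norm_pow, norm_norm]
    gcongr
    exact norm_eval_le M θ
  · simp only [eval_taylorPolynomial]
    exact ((hasSum_taylorCoeff hf (bpt θ)).tendsto_sum_nat.norm).pow 2

lemma bint_sq_norm_le_of_sum_sq_norm_taylorCoeff_le {f : ℂ → ℂ} (hf : Differentiable ℂ f) {C : ℝ}
    (hC : ∀ M, ∑ n ∈ Finset.range M, ‖taylorCoeff f n‖ ^ 2 ≤ C) :
    bint (fun z ↦ ‖f z‖ ^ 2) ≤ 2 * π * C :=
  le_of_tendsto' (tendsto_bint_sq_norm_taylorPolynomial hf) fun M ↦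
    (bint_sq_norm_taylorPolynomial_le f M).trans
      (mul_le_mul_of_nonneg_left (hC M) two_pi_pos.le)

theorem bint_exp_two_re_polynomial_le (P : Polynomial ℂ) :
    bint (fun z ↦ exp (2 * (P.eval z).re)) ≤
      2 * π * exp (2 * (P.coeff 0).re + polynomialEnergy P) := by
  have sq_norm_exp (w : ℂ) : ‖Complex.exp w‖ ^ 2 = exp (2 * w.re) := by
    rw [Complex.norm_exp, ← Real.exp_nat_mul, Nat.cast_ofNat]
  simpa only [sq_norm_exp] using bint_sq_norm_le_of_sum_sq_norm_taylorCoeff_le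
    (differentiable_cexp_eval P) (sum_sq_norm_taylorCoeff_cexp_le P)

/-! ### Fourier coefficients on the unit circle -/

/-- The `n`-th Fourier coefficient `(2π)⁻¹ ∫ f(x) x⁻ⁿ` of the restriction of `f` to the unit
circle. -/
def circleCoeff (f : ℂ → ℂ) (n : ℤ) : ℂ :=
  (2 * π : ℂ)⁻¹ * ∫ θ in (0 : ℝ)..2 * π, bpt θ ^ (-n) * f (bpt θ)

lemma fourier_two_pi (n : ℤ) (θ : ℝ) : fourier n (θ : AddCircle (2 * π)) = bpt θ ^ n := by
  have pi_ne_zero : (π : ℂ) ≠ 0 := mod_cast Real.pi_ne_zero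
  rw [fourier_coe_apply, bpt, ← Complex.exp_int_mul]
  congr 1
  push_cast
  field_simp

lemma fourierCoeffOn_two_pi (f : ℂ → ℂ) (n : ℤ) :
    fourierCoeffOn two_pi_pos (fun θ ↦ f (bpt θ)) n = circleCoeff f n := by
  rw [fourierCoeffOn_eq_integral, circleCoeff, sub_zero]
  simp only [fourier_two_pi, Complex.real_smul, smul_eq_mul, one_div]
  push_cast
  rfl

local instance fact_two_pi_pos : Fact (0 < 2 * π) := ⟨two_pi_pos⟩

lemma fourierCoeff_eq_circleCoeff {f : ℂ → ℂ} {g : AddCircle (2 * π) → ℂ}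
    (hg : ∀ θ : ℝ, g θ = f (bpt θ)) (n : ℤ) : fourierCoeff g n = circleCoeff f n := by
  rw [fourierCoeff_eq_intervalIntegral g n 0, zero_add, circleCoeff]
  simp only [fourier_two_pi, Complex.real_smul, smul_eq_mul, one_div, hg]
  push_cast
  rfl

lemma circleCoeff_polynomial_eval (P : Polynomial ℂ) (n : ℤ) :
    circleCoeff (fun x ↦ P.eval x) n = if 0 ≤ n then P.coeff n.natAbs else 0 := by
  rw [← Polynomial.fourierCoeff_toAddCircle]
  refine (fourierCoeff_eq_circleCoeff (fun θ ↦ ?_) n).symm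
  simp [Polynomial.toAddCircle, AddCircle.toCircle, bpt]

lemma conj_bpt_zpow (θ : ℝ) (n : ℤ) : (starRingEnd ℂ) (bpt θ ^ n) = bpt θ ^ (-n) := by
  rw [map_zpow₀, ← Complex.inv_eq_conj (norm_bpt θ), inv_zpow']

lemma circleCoeff_conj (f : ℂ → ℂ) (n : ℤ) :
    circleCoeff (fun x ↦ (starRingEnd ℂ) (f x)) n = (starRingEnd ℂ) (circleCoeff f (-n)) := by
  simp only [circleCoeff, map_mul, map_inv₀, neg_neg, ← intervalIntegral.intervalIntegral_conj,
    conj_bpt_zpow, Complex.conj_ofReal, Complex.conj_ofNat]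

lemma circleCoeff_neg_of_real (v : ℂ → ℝ) (n : ℤ) :
    circleCoeff (fun x ↦ (v x : ℂ)) (-n) = (starRingEnd ℂ) (circleCoeff (fun x ↦ (v x : ℂ)) n) := by
  simpa using circleCoeff_conj (fun x ↦ (v x : ℂ)) (-n)

lemma circleCoeff_zero_of_real (v : ℂ → ℝ) :
    circleCoeff (fun x ↦ (v x : ℂ)) 0 = ((2 * π)⁻¹ * bint v : ℝ) := by
  simp [circleCoeff, bint, intervalIntegral.integral_ofReal]

lemma circleCoeff_two_mul_re_polynomial_eval (P : Polynomial ℂ) {k : ℕ} (hk : k ≠ 0) :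
    circleCoeff (fun x ↦ ((2 * (P.eval x).re : ℝ) : ℂ)) k = P.coeff k := by
  have two_re_eq (x : ℂ) :
      ((2 * (P.eval x).re : ℝ) : ℂ) = P.eval x + (starRingEnd ℂ) (P.eval x) := by
    rw [Complex.add_conj]
  have coeff_add : circleCoeff (fun x ↦ P.eval x + (starRingEnd ℂ) (P.eval x)) k =
      circleCoeff (fun x ↦ P.eval x) k + circleCoeff (fun x ↦ (starRingEnd ℂ) (P.eval x)) k := by
    have ne_zero (θ : ℝ) : bpt θ ≠ 0 := Complex.exp_ne_zero _
    simp only [circleCoeff, mul_add]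
    rw [intervalIntegral.integral_add, mul_add] <;>
      exact (Continuous.mul (continuous_bpt.zpow₀ _ fun θ ↦ .inl (ne_zero θ))
        (by fun_prop)).intervalIntegrable _ _
  simp only [two_re_eq]
  rw [coeff_add, circleCoeff_conj, circleCoeff_polynomial_eval, circleCoeff_polynomial_eval]
  simp [hk]

section Summability

variable {f g : ℂ → ℂ}

lemma summable_sq_norm_circleCoeff (hf : ContinuousOn f unitCircle) :
    Summable fun n : ℤ ↦ ‖circleCoeff f n‖ ^ 2 := by
  obtain ⟨C, norm_le⟩ := isCompact_unitCircle.exists_bound_of_continuousOn hf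
  have memLp : MemLp (fun θ ↦ f (bpt θ)) 2 (volume.restrict (Set.Ioc 0 (2 * π))) :=
    .of_bound (continuous_comp_bpt hf).aestronglyMeasurable C
      (.of_forall fun θ ↦ norm_le _ (bpt_mem_unitCircle θ))
  simpa only [fourierCoeffOn_two_pi] using (hasSum_sq_fourierCoeffOn two_pi_pos memLp).summable

lemma hasSum_circleCoeff (hf : ContinuousOn f unitCircle)
    (summable : Summable fun n : ℤ ↦ ‖circleCoeff f n‖) (θ : ℝ) :
    HasSum (fun n : ℤ ↦ circleCoeff f n * bpt θ ^ n) (f (bpt θ)) := by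
  let F : C(AddCircle (2 * π), ℂ) :=
    ⟨(periodic_bpt.comp f).lift, continuous_coinduced_dom.2 (continuous_comp_bpt hf)⟩
  have coeff_F := fourierCoeff_eq_circleCoeff (f := f) (g := F) fun _ ↦ rfl
  have summable_F : Summable (fourierCoeff F) := by
    simpa only [← funext coeff_F] using Summable.of_norm summable
  simpa only [coeff_F, fourier_two_pi, smul_eq_mul] using!
    has_pointwise_sum_fourier_series_of_summable summable_F (θ : AddCircle (2 * π))

lemma norm_circleCoeff_of_hasDerivAt
    (hfg : ∀ θ, HasDerivAt (fun θ ↦ f (bpt θ)) (g (bpt θ)) θ) (hg : ContinuousOn g unitCircle)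
    {n : ℤ} (hn : n ≠ 0) :
    ‖circleCoeff f n‖ = |(n : ℝ)|⁻¹ * ‖circleCoeff g n‖ := by
  have by_parts := fourierCoeffOn_of_hasDerivAt two_pi_pos hn (fun θ _ ↦ hfg θ)
    ((continuous_comp_bpt hg).intervalIntegrable _ _)
  rw [fourierCoeffOn_two_pi, fourierCoeffOn_two_pi, periodic_bpt.eq, sub_self, mul_zero] at by_parts
  have n_ne_zero : |(n : ℝ)| ≠ 0 := by simpa using hn
  rw [by_parts]
  simp only [neg_mul, one_div, inv_neg, mul_inv_rev, Complex.inv_I, mul_neg, neg_neg,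
    Complex.ofReal_mul, Complex.ofReal_ofNat, Complex.ofReal_zero, sub_zero, zero_sub, norm_neg,
    norm_mul, norm_inv, Complex.norm_intCast, Complex.norm_I, Complex.norm_real, norm_eq_abs,
    abs_of_pos pi_pos, Complex.norm_ofNat, one_mul]
  field_simp

lemma summable_norm_circleCoeff_of_hasDerivAt
    (hfg : ∀ θ, HasDerivAt (fun θ ↦ f (bpt θ)) (g (bpt θ)) θ) (hg : ContinuousOn g unitCircle) :
    Summable fun n : ℤ ↦ ‖circleCoeff f n‖ := by
  have majorant : Summable fun n : ℤ ↦ 1 / (n : ℝ) ^ 2 + ‖circleCoeff g n‖ ^ 2 :=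
    (summable_one_div_int_pow.2 one_lt_two).add (summable_sq_norm_circleCoeff hg)
  refine majorant.of_norm_bounded_eventually ?_
  filter_upwards [(Set.finite_singleton (0 : ℤ)).compl_mem_cofinite] with n hn
  rw [norm_norm, norm_circleCoeff_of_hasDerivAt hfg hg hn, ← sq_abs (n : ℝ), one_div, ← inv_pow]
  nlinarith [sq_nonneg (|(n : ℝ)|⁻¹ - ‖circleCoeff g n‖), sq_nonneg |(n : ℝ)|⁻¹,
    sq_nonneg ‖circleCoeff g n‖]

end Summability

/-! ### The Lebedev–Milin inequality on the disk -/

lemma hasFDerivAt_re_polynomial_eval (P : Polynomial ℂ) (x : ℂ) :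
    HasFDerivAt (fun y ↦ (P.eval y).re)
      (Complex.reCLM.comp ((ContinuousLinearMap.toSpanSingleton ℂ
        (P.derivative.eval x)).restrictScalars ℝ)) x :=
  Complex.reCLM.hasFDerivAt.comp x ((P.hasDerivAt x).hasFDerivAt.restrictScalars ℝ)

lemma contDiff_re_polynomial_eval (P : Polynomial ℂ) {n : WithTop ℕ∞} :
    ContDiff ℝ n fun x ↦ (P.eval x).re :=
  Complex.reCLM.contDiff.comp (P.contDiff_aeval n |>.restrict_scalars ℝ)

lemma pd_re_polynomial_eval (P : Polynomial ℂ) (a x : ℂ) :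
    pd (fun y ↦ (P.eval y).re) a x = (a * P.derivative.eval x).re := by
  rw [pd, (hasFDerivAt_re_polynomial_eval P x).fderiv]
  simp

lemma pd_mul {f g : ℂ → ℝ} (hf : Differentiable ℝ f) (hg : Differentiable ℝ g) (a x : ℂ) :
    pd (fun y ↦ f y * g y) a x = f x * pd g a x + g x * pd f a x := by
  rw [pd, fderiv_fun_mul (hf x) (hg x)]
  rfl

section Dirichlet

variable {v : ℂ → ℝ}

lemma integral_divergence_mul_re_polynomial_eval (hv : ContDiff ℝ 1 v) (P : Polynomial ℂ) :
    ∫ x in unitDisk, (pd v 1 x * (P.eval x).re + pd v Complex.I x * (Complex.I * P.eval x).re) =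
      bint fun x ↦ v x * (x * P.eval x).re := by
  set p := fun x ↦ (P.eval x).re
  set q := fun x ↦ ((Polynomial.C Complex.I * P).eval x).re
  have hp : ContDiff ℝ 1 p := contDiff_re_polynomial_eval _
  have hq : ContDiff ℝ 1 q := contDiff_re_polynomial_eval _
  have divergence_free (x : ℂ) : pd p 1 x + pd q Complex.I x = 0 := by
    rw [pd_re_polynomial_eval, pd_re_polynomial_eval, Polynomial.derivative_C_mul,
      Polynomial.eval_C_mul, ← mul_assoc, Complex.I_mul_I, ← Complex.add_re]
    simp
  have q_eq (x : ℂ) : q x = (Complex.I * P.eval x).re := by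
    simp only [q, Polynomial.eval_C_mul]
  convert integral_divergence_unitDisk (hv.mul hp) (hv.mul hq) using 2
  · funext x
    rw [pd_mul (hv.differentiable one_ne_zero) (hp.differentiable one_ne_zero),
      pd_mul (hv.differentiable one_ne_zero) (hq.differentiable one_ne_zero), q_eq]
    linear_combination -v x * divergence_free x
  · funext x
    rw [q_eq, Complex.mul_re, Complex.I_mul_re]
    ring

theorem integral_grad_mul_grad_re_polynomial_eval (hv : ContDiff ℝ 1 v) (P : Polynomial ℂ) :
    ∫ x in unitDisk, (pd v 1 x * pd (fun y ↦ (P.eval y).re) 1 x +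
        pd v Complex.I x * pd (fun y ↦ (P.eval y).re) Complex.I x) =
      bint fun x ↦ v x * (x * P.derivative.eval x).re := by
  simp only [pd_re_polynomial_eval, one_mul, integral_divergence_mul_re_polynomial_eval hv]

lemma bint_mul_re_monomial (hv : ContinuousOn v unitCircle) (a : ℂ) (k : ℕ) :
    bint (fun x ↦ v x * (a * x ^ k).re) =
      2 * π * (a * (starRingEnd ℂ) (circleCoeff (fun x ↦ (v x : ℂ)) k)).re := by
  have hvθ : Continuous fun θ ↦ (v (bpt θ) : ℂ) :=
    Complex.continuous_ofReal.comp (continuous_comp_bpt hv)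
  have integral_eq : ∫ θ in (0 : ℝ)..2 * π, v (bpt θ) * (a * bpt θ ^ k) =
      (2 * π : ℝ) * (a * (starRingEnd ℂ) (circleCoeff (fun x ↦ (v x : ℂ)) k)) := by
    simp only [mul_left_comm _ a, intervalIntegral.integral_const_mul]
    rw [← circleCoeff_neg_of_real, circleCoeff, neg_neg]
    simp only [zpow_natCast, mul_comm (bpt _ ^ k)]
    have : (π : ℂ) ≠ 0 := mod_cast pi_ne_zero
    push_cast
    field_simp
  rw [← Complex.re_ofReal_mul, ← integral_eq, ← Complex.reCLM_apply,
    ← Complex.reCLM.intervalIntegral_comp_comm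
      (Continuous.intervalIntegrable (by fun_prop) _ _)]
  simp only [Complex.reCLM_apply, Complex.re_ofReal_mul, bint]

lemma bint_mul_re_mul_derivative_eval (hv : ContinuousOn v unitCircle) (P : Polynomial ℂ) :
    bint (fun x ↦ v x * (x * P.derivative.eval x).re) =
      2 * π * P.sum fun k a ↦
        k * (a * (starRingEnd ℂ) (circleCoeff (fun x ↦ (v x : ℂ)) k)).re := by
  have continuousOn (Q : Polynomial ℂ) :
      ContinuousOn (fun x ↦ v x * (x * Q.derivative.eval x).re) unitCircle := by
    fun_prop
  induction P using Polynomial.induction_on' with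
  | add P Q hP hQ =>
    rw [Polynomial.sum_add_index _ _ _ (by simp)
      (fun k a b ↦ by rw [add_mul, Complex.add_re, mul_add]), mul_add, ← hP, ← hQ,
      ← bint_add (continuousOn P) (continuousOn Q)]
    simp only [Polynomial.derivative_add, Polynomial.eval_add, mul_add, Complex.add_re]
  | monomial k a =>
    rw [Polynomial.sum_monomial_index _ _ (by simp), mul_left_comm, ← bint_mul_re_monomial hv,
      ← bint_const_mul]
    refine bint_congr fun x _ ↦ ?_
    have euler : x * (Polynomial.monomial k a).derivative.eval x = (k : ℝ) * (a * x ^ k) := by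
      rcases k with _ | k
      · simp
      · simp only [Polynomial.derivative_monomial, Polynomial.eval_monomial,
          Nat.add_sub_cancel]
        push_cast
        ring
    rw [euler, Complex.re_ofReal_mul, mul_left_comm]

lemma integral_grad_mul_grad_re_polynomial_eval_of_circleCoeff_eq (hv : ContDiff ℝ 1 v)
    {P : Polynomial ℂ}
    (hP : ∀ k ∈ P.support, k ≠ 0 → circleCoeff (fun x ↦ (v x : ℂ)) k = P.coeff k) :
    ∫ x in unitDisk, (pd v 1 x * pd (fun y ↦ (P.eval y).re) 1 x +
        pd v Complex.I x * pd (fun y ↦ (P.eval y).re) Complex.I x) =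
      2 * π * polynomialEnergy P := by
  rw [integral_grad_mul_grad_re_polynomial_eval hv, bint_mul_re_mul_derivative_eval
    hv.continuous.continuousOn, polynomialEnergy, Polynomial.sum_def, Polynomial.sum_def]
  congr 1
  refine Finset.sum_congr rfl fun k hk ↦ ?_
  rcases eq_or_ne k 0 with rfl | hk0
  · simp
  · rw [hP k hk hk0, Complex.mul_conj, Complex.ofReal_re, Complex.normSq_eq_norm_sq]

-- Among all functions with the given boundary coefficients, `2 Re P` minimizes the energy.
theorem polynomialEnergy_le_integral_gradSq (hv : ContDiff ℝ 1 v) {P : Polynomial ℂ}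
    (hP : ∀ k ∈ P.support, k ≠ 0 → circleCoeff (fun x ↦ (v x : ℂ)) k = P.coeff k) :
    4 * π * polynomialEnergy P ≤ ∫ x in unitDisk, gradSq v x := by
  set r := fun x ↦ (P.eval x).re
  have hr : ContDiff ℝ 1 r := contDiff_re_polynomial_eval P
  have integral_v := integral_grad_mul_grad_re_polynomial_eval_of_circleCoeff_eq hv hP
  have integral_two_r := integral_grad_mul_grad_re_polynomial_eval_of_circleCoeff_eq
    (contDiff_const.mul hr) fun k _ hk ↦ circleCoeff_two_mul_re_polynomial_eval P hk
  have pd_two_r (a x : ℂ) : pd (fun x ↦ 2 * r x) a x = 2 * pd r a x :=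
    pd_const_mul (hr.differentiable one_ne_zero x) 2 a
  have integrable {f : ℂ → ℝ} (hf : Continuous f) : IntegrableOn f unitDisk :=
    integrableOn_unitDisk hf.continuousOn
  have continuous_pd_v := continuous_pd hv
  have continuous_pd_r := continuous_pd hr
  have continuous_gradSq_v := continuous_gradSq hv
  calc 4 * π * polynomialEnergy P
      = 4 * (∫ x in unitDisk, (pd v 1 x * pd r 1 x + pd v Complex.I x * pd r Complex.I x)) -
        2 * ∫ x in unitDisk, (pd (fun x ↦ 2 * r x) 1 x * pd r 1 x +
          pd (fun x ↦ 2 * r x) Complex.I x * pd r Complex.I x) := by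
        rw [integral_v, integral_two_r]
        ring
    _ = ∫ x in unitDisk, (4 * (pd v 1 x * pd r 1 x + pd v Complex.I x * pd r Complex.I x) -
        2 * (2 * pd r 1 x * pd r 1 x + 2 * pd r Complex.I x * pd r Complex.I x)) := by
        simp only [pd_two_r]
        rw [← integral_const_mul, ← integral_const_mul, integral_sub]
        · exact integrable (by fun_prop)
        · exact integrable (by fun_prop)
    _ ≤ ∫ x in unitDisk, gradSq v x := by
        refine setIntegral_mono (integrable (by fun_prop)) (integrable (by fun_prop)) fun x ↦ ?_
        rw [gradSq]
        nlinarith [sq_nonneg (pd v 1 x - 2 * pd r 1 x),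
          sq_nonneg (pd v Complex.I x - 2 * pd r Complex.I x)]

end Dirichlet

section LebedevMilin

variable {v : ℂ → ℝ}

lemma summable_norm_circleCoeff_of_contDiff (hv : ContDiff ℝ 1 v) :
    Summable fun n : ℤ ↦ ‖circleCoeff (fun x ↦ (v x : ℂ)) n‖ := by
  have hasDerivAt (θ : ℝ) : HasDerivAt (fun θ ↦ (v (bpt θ) : ℂ))
      (fderiv ℝ v (bpt θ) (bpt θ * Complex.I) : ℝ) θ :=
    ((hv.differentiable one_ne_zero (bpt θ)).hasFDerivAt.comp_hasDerivAt θ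
      (hasDerivAt_bpt θ)).ofReal_comp
  have continuous_deriv : Continuous fun x ↦ ((fderiv ℝ v x (x * Complex.I) : ℝ) : ℂ) :=
    Complex.continuous_ofReal.comp
      ((hv.continuous_fderiv one_ne_zero).clm_apply (continuous_mul_const _))
  exact summable_norm_circleCoeff_of_hasDerivAt hasDerivAt continuous_deriv.continuousOn

/-- The polynomial of degree at most `N` such that twice its real part is the `N`-th symmetric
partial sum of the Fourier series of `v` on the unit circle. The constant coefficient is halved
because it is its own mirror image. -/
def fourierPolynomial (v : ℂ → ℝ) (N : ℕ) : Polynomial ℂ :=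
  ∑ k ∈ Finset.range (N + 1), Polynomial.monomial k (circleCoeff (fun x ↦ (v x : ℂ)) k) -
    Polynomial.C (circleCoeff (fun x ↦ (v x : ℂ)) 0 / 2)

lemma two_mul_re_coeff_fourierPolynomial_zero (v : ℂ → ℝ) (N : ℕ) :
    2 * ((fourierPolynomial v N).coeff 0).re = (2 * π)⁻¹ * bint v := by
  have coeff_zero : (fourierPolynomial v N).coeff 0 = circleCoeff (fun x ↦ (v x : ℂ)) 0 / 2 := by
    simp [fourierPolynomial, Polynomial.coeff_monomial, sub_half]
  rw [coeff_zero, circleCoeff_zero_of_real, Complex.div_ofNat_re, Complex.ofReal_re,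
    mul_div_cancel₀ _ two_ne_zero]

lemma circleCoeff_eq_coeff_fourierPolynomial (v : ℂ → ℝ) (N : ℕ) :
    ∀ k ∈ (fourierPolynomial v N).support, k ≠ 0 →
      circleCoeff (fun x ↦ (v x : ℂ)) k = (fourierPolynomial v N).coeff k := by
  intro k hk hk0
  rw [Polynomial.mem_support_iff] at hk
  simp only [fourierPolynomial, Polynomial.coeff_sub, Polynomial.finsetSum_coeff,
    Polynomial.coeff_monomial, Polynomial.coeff_C_of_ne_zero hk0, Finset.sum_ite_eq', sub_zero]
    at hk ⊢
  rw [if_pos (by_contra fun hkN ↦ hk (if_neg hkN))]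

lemma two_mul_re_eval_fourierPolynomial (v : ℂ → ℝ) (N : ℕ) (x : ℂ) :
    2 * ((fourierPolynomial v N).eval x).re =
      ∑ k ∈ Finset.range (N + 1), 2 * (circleCoeff (fun x ↦ (v x : ℂ)) k * x ^ k).re -
        (circleCoeff (fun x ↦ (v x : ℂ)) 0).re := by
  simp only [fourierPolynomial, Polynomial.eval_sub, Polynomial.eval_finsetSum,
    Polynomial.eval_monomial, Polynomial.eval_C, Complex.sub_re, Complex.re_sum, Finset.mul_sum,
    mul_sub, Complex.div_ofNat_re]
  ring

lemma hasSum_two_mul_re_circleCoeff (hv : ContDiff ℝ 1 v) (θ : ℝ) :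
    HasSum (fun k : ℕ ↦ 2 * (circleCoeff (fun x ↦ (v x : ℂ)) k * bpt θ ^ k).re)
      (v (bpt θ) + (circleCoeff (fun x ↦ (v x : ℂ)) 0).re) := by
  have two_sided := (hasSum_circleCoeff (f := fun x ↦ (v x : ℂ))
    (Complex.continuous_ofReal.comp hv.continuous).continuousOn
    (summable_norm_circleCoeff_of_contDiff hv) θ).nat_add_neg
  have term_eq (k : ℕ) : circleCoeff (fun x ↦ (v x : ℂ)) k * bpt θ ^ (k : ℤ) +
      circleCoeff (fun x ↦ (v x : ℂ)) (-k) * bpt θ ^ (-k : ℤ) =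
      (2 * (circleCoeff (fun x ↦ (v x : ℂ)) k * bpt θ ^ k).re : ℝ) := by
    rw [circleCoeff_neg_of_real, ← conj_bpt_zpow, ← map_mul, zpow_natCast, Complex.add_conj]
  simpa only [term_eq, Complex.ofReal_re, Complex.add_re, zpow_zero, mul_one] using
    Complex.hasSum_re two_sided

lemma tendsto_two_mul_re_eval_fourierPolynomial (hv : ContDiff ℝ 1 v) (θ : ℝ) :
    Tendsto (fun N ↦ 2 * ((fourierPolynomial v N).eval (bpt θ)).re) atTop (nhds (v (bpt θ))) := by
  simpa only [two_mul_re_eval_fourierPolynomial, Function.comp_apply, add_sub_cancel_right] using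
    (((hasSum_two_mul_re_circleCoeff hv θ).tendsto_sum_nat.comp
      (tendsto_add_atTop_nat 1)).sub_const (circleCoeff (fun x ↦ (v x : ℂ)) 0).re)

lemma two_mul_re_eval_fourierPolynomial_le (hv : ContDiff ℝ 1 v) (N : ℕ) (θ : ℝ) :
    2 * ((fourierPolynomial v N).eval (bpt θ)).re ≤
      2 * ∑' k : ℕ, ‖circleCoeff (fun x ↦ (v x : ℂ)) k‖ -
        (circleCoeff (fun x ↦ (v x : ℂ)) 0).re := by
  have summable : Summable fun k : ℕ ↦ ‖circleCoeff (fun x ↦ (v x : ℂ)) k‖ :=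
    (summable_norm_circleCoeff_of_contDiff hv).comp_injective Nat.cast_injective
  rw [two_mul_re_eval_fourierPolynomial, ← Finset.mul_sum]
  gcongr
  calc ∑ k ∈ Finset.range (N + 1), (circleCoeff (fun x ↦ (v x : ℂ)) k * bpt θ ^ k).re
      ≤ ∑ k ∈ Finset.range (N + 1), ‖circleCoeff (fun x ↦ (v x : ℂ)) k‖ := by
        gcongr with k
        simpa [norm_bpt] using
          Complex.re_le_norm (circleCoeff (fun x ↦ (v x : ℂ)) k * bpt θ ^ k)
    _ ≤ _ := summable.sum_le_tsum _ fun _ _ ↦ norm_nonneg _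

theorem bint_exp_le_lebedev_milin (hv : ContDiff ℝ 1 v) :
    bint (fun x ↦ exp (v x)) ≤
      2 * π * exp ((2 * π)⁻¹ * bint v + (4 * π)⁻¹ * ∫ x in unitDisk, gradSq v x) := by
  set P := fourierPolynomial v
  have bound (N : ℕ) : bint (fun x ↦ exp (2 * ((P N).eval x).re)) ≤
      2 * π * exp ((2 * π)⁻¹ * bint v + (4 * π)⁻¹ * ∫ x in unitDisk, gradSq v x) := by
    refine (bint_exp_two_re_polynomial_le (P N)).trans ?_
    rw [two_mul_re_coeff_fourierPolynomial_zero]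
    gcongr
    rw [le_inv_mul_iff₀ (by positivity)]
    exact polynomialEnergy_le_integral_gradSq hv (circleCoeff_eq_coeff_fourierPolynomial v N)
  refine le_of_tendsto' (x := atTop) ?_ bound
  refine intervalIntegral.tendsto_integral_filter_of_dominated_convergence
    (fun _ ↦ exp (2 * ∑' k : ℕ, ‖circleCoeff (fun x ↦ (v x : ℂ)) k‖ -
      (circleCoeff (fun x ↦ (v x : ℂ)) 0).re))
    (.of_forall fun N ↦ ?_) (.of_forall fun N ↦ ?_) intervalIntegrable_const
    (.of_forall fun θ _ ↦ ?_)
  · exact Continuous.aestronglyMeasurable (by fun_prop)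
  · refine .of_forall fun θ _ ↦ ?_
    rw [norm_eq_abs, abs_exp, exp_le_exp]
    exact two_mul_re_eval_fourierPolynomial_le hv N θ
  · exact (continuous_exp.tendsto _).comp (tendsto_two_mul_re_eval_fourierPolynomial hv θ)

end LebedevMilin

/-! ### The energy on the constraint set and on constants -/

lemma Tfun_nonneg (u : ℂ → ℝ) : 0 ≤ Tfun u := by
  refine integral_nonneg fun x ↦ ?_
  have exp_ge := add_one_le_exp (u x)
  have grad_ge := gradSq_nonneg u x
  simp only [Pi.zero_apply]
  linarith

section LowerBound

variable {K h u : ℂ → ℝ}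

theorem le_bint_add_integral_gradSq_of_bint_exp_half_eq_one (hu : ContDiff ℝ 1 u)
    (hu_constraint : bint (fun x ↦ exp (u x / 2)) = 1) :
    -(8 * π * log (2 * π)) ≤ (∫ x in unitDisk, (1 / 2) * gradSq u x) + bint (fun x ↦ 2 * u x) := by
  have lebedev_milin := bint_exp_le_lebedev_milin (hu.div_const 2)
  have bint_half : bint (fun x ↦ u x / 2) = bint u / 2 := intervalIntegral.integral_div _ _
  have gradSq_half (x : ℂ) : gradSq (fun x ↦ u x / 2) x = gradSq u x / 4 := by
    have pd_half (a : ℂ) : pd (fun x ↦ u x / 2) a x = 2⁻¹ * pd u a x := by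
      simp only [div_eq_inv_mul, pd_const_mul (hu.differentiable one_ne_zero x)]
    rw [gradSq, gradSq, pd_half, pd_half]
    ring
  simp only [hu_constraint, bint_half, gradSq_half, integral_div] at lebedev_milin
  have log_ge := log_le_log one_pos lebedev_milin
  rw [log_one, log_mul (by positivity) (by positivity), log_exp] at log_ge
  have rescale (b D : ℝ) : 8 * π * (log (2 * π) + ((2 * π)⁻¹ * (b / 2) + (4 * π)⁻¹ * (D / 4))) =
      8 * π * log (2 * π) + 2 * b + 1 / 2 * D := by
    field_simp
    ring
  have rescaled_ge := mul_nonneg (by positivity : 0 ≤ 8 * π) log_ge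
  rw [rescale] at rescaled_ge
  rw [bint_const_mul, integral_const_mul]
  linarith

theorem le_Ifun_of_bint_exp_half_eq_one (hK : ContinuousOn K closedUnitDisk)
    (hK_nonpos : ∀ x ∈ closedUnitDisk, K x ≤ 0) (hh : ContinuousOn h unitCircle) {H : ℝ}
    (hH : ∀ x ∈ unitCircle, h x ≤ H) (hu : ContDiff ℝ 1 u)
    (hu_constraint : bint (fun x ↦ exp (u x / 2)) = 1) :
    -(8 * π * log (2 * π) + 4 * H) ≤ Ifun K h u := by
  have hu_continuous := hu.continuous
  have hgrad := continuous_gradSq hu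
  have interior_ge : ∫ x in unitDisk, (1 / 2) * gradSq u x ≤
      ∫ x in unitDisk, ((1 / 2) * gradSq u x - 2 * K x * exp (u x)) := by
    refine setIntegral_mono_on (integrableOn_unitDisk (by fun_prop))
      (integrableOn_unitDisk (by fun_prop)) isOpen_unitDisk.measurableSet fun x hx ↦ ?_
    have := mul_nonneg (neg_nonneg.2 (hK_nonpos x (unitDisk_subset_closedUnitDisk hx)))
      (exp_pos (u x)).le
    linarith
  have boundary_ge : bint (fun x ↦ 2 * u x) - 4 * H ≤
      bint (fun x ↦ 2 * u x - 4 * h x * exp (u x / 2)) := by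
    rw [bint_sub (by fun_prop) (by fun_prop)]
    gcongr
    calc bint (fun x ↦ 4 * h x * exp (u x / 2)) ≤ bint (fun x ↦ 4 * H * exp (u x / 2)) := by
          refine bint_mono (by fun_prop) (by fun_prop) fun x hx ↦ ?_
          gcongr
          exact hH x hx
      _ = 4 * H := by rw [bint_const_mul, hu_constraint, mul_one]
  have sharp := le_bint_add_integral_gradSq_of_bint_exp_half_eq_one hu hu_constraint
  rw [Ifun]
  linarith

end LowerBound

lemma Ifun_const (K : ℂ → ℝ) {h : ℂ → ℝ} (hh : ContinuousOn h unitCircle) (c : ℝ) :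
    Ifun K h (fun _ ↦ c) =
      -2 * exp c * (∫ x in unitDisk, K x) + 4 * π * c - 4 * exp (c / 2) * bint h := by
  have gradSq_const (x : ℂ) : gradSq (fun _ ↦ c) x = 0 := by simp [gradSq, pd]
  have interior_eq (x : ℂ) :
      1 / 2 * gradSq (fun _ ↦ c) x - 2 * K x * exp c = -2 * exp c * K x := by
    rw [gradSq_const]
    ring
  have boundary_eq (x : ℂ) : 4 * h x * exp (c / 2) = 4 * exp (c / 2) * h x := by ring
  simp only [Ifun, interior_eq, boundary_eq]
  rw [integral_const_mul, bint_sub (by fun_prop) (by fun_prop), bint_const, bint_const_mul]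
  ring

lemma tendsto_Ifun_const_atBot (K : ℂ → ℝ) {h : ℂ → ℝ} (hh : ContinuousOn h unitCircle) :
    Tendsto (fun c : ℝ ↦ Ifun K h fun _ ↦ c) atBot atBot := by
  have exp_half : Tendsto (fun c : ℝ ↦ exp (c / 2)) atBot (nhds 0) :=
    tendsto_exp_atBot.comp (tendsto_id.atBot_div_const two_pos)
  have bounded_part : Tendsto
      (fun c ↦ -2 * exp c * (∫ x in unitDisk, K x) - 4 * exp (c / 2) * bint h) atBot (nhds 0) := by
    simpa using ((tendsto_exp_atBot.const_mul (-2)).mul_const _).sub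
      ((exp_half.const_mul 4).mul_const (bint h))
  refine (bounded_part.add_atBot (tendsto_id.const_mul_atBot (by positivity : 0 < 4 * π))).congr
    fun c ↦ ?_
  rw [Ifun_const K hh, id]
  ring

theorem exists_bint_exp_half_lt_one_Ifun_lt (K : ℂ → ℝ) {h : ℂ → ℝ}
    (hh : ContinuousOn h unitCircle) (A : ℝ) :
    ∃ u : ℂ → ℝ, ContDiff ℝ 1 u ∧ bint (fun x ↦ exp (u x / 2)) < 1 ∧ Ifun K h u < A := by
  have bint_tendsto : Tendsto (fun c : ℝ ↦ bint (fun _ ↦ exp (c / 2))) atBot (nhds 0) := by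
    simpa [bint_const] using
      (tendsto_exp_atBot.comp (tendsto_id.atBot_div_const two_pos)).const_mul (2 * π)
  obtain ⟨c, bint_lt, Ifun_lt⟩ := ((bint_tendsto.eventually_lt_const one_pos).and
    ((tendsto_Ifun_const_atBot K hh).eventually_lt_atBot A)).exists
  exact ⟨fun _ ↦ c, contDiff_const, bint_lt, Ifun_lt⟩

/-! ### Profiles concentrating at a boundary point -/

lemma exists_contDiff_eqOn_closedBall {E F : Type*} [NormedAddCommGroup E] [NormedSpace ℝ E]
    [HasContDiffBump E] [NormedAddCommGroup F] [NormedSpace ℝ F] {n : ℕ∞} {f : E → F} {c : E}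
    {r R : ℝ} (hr : 0 < r) (hrR : r < R) (hf : ContDiffOn ℝ n f (Metric.ball c R)) :
    ∃ g : E → F, ContDiff ℝ n g ∧ Set.EqOn g f (Metric.closedBall c r) := by
  obtain ⟨s, hrs, hsR⟩ := exists_between hrR
  let cutoff : ContDiffBump c := ⟨r, s, hr, hrs⟩
  refine ⟨fun x ↦ cutoff x • f x, contMDiff_iff_contDiff.1 (contMDiff_of_tsupport fun x hx ↦ ?_),
    fun x hx ↦ ?_⟩
  · have mem_closedBall : x ∈ Metric.closedBall c s :=
      cutoff.tsupport_eq ▸ tsupport_smul_subset_left cutoff f hx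
    have mem_ball := Metric.closedBall_subset_ball hsR mem_closedBall
    exact (cutoff.contDiffAt.smul
      (hf.contDiffAt (Metric.isOpen_ball.mem_nhds mem_ball))).contMDiffAt
  · simp only [cutoff.one_of_mem_closedBall hx, one_smul]

lemma pd_congr {u v : ℂ → ℝ} {x : ℂ} (h : Set.EqOn u v closedUnitDisk) (a : ℂ)
    (hx : x ∈ unitDisk) : pd u a x = pd v a x := by
  have eventuallyEq : u =ᶠ[nhds x] v :=
    (h.mono unitDisk_subset_closedUnitDisk).eventuallyEq_of_mem (isOpen_unitDisk.mem_nhds hx)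
  rw [pd, pd, eventuallyEq.fderiv_eq]

lemma Ifun_congr (K h : ℂ → ℝ) {u v : ℂ → ℝ} (huv : Set.EqOn u v closedUnitDisk) :
    Ifun K h u = Ifun K h v := by
  have interior_eq : Set.EqOn (fun x ↦ (1 / 2) * gradSq u x - 2 * K x * exp (u x))
      (fun x ↦ (1 / 2) * gradSq v x - 2 * K x * exp (v x)) unitDisk := fun x hx ↦ by
    simp only [gradSq, pd_congr huv _ hx, huv (unitDisk_subset_closedUnitDisk hx)]
  have boundary_eq : Set.EqOn (fun x ↦ 2 * u x - 4 * h x * exp (u x / 2))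
      (fun x ↦ 2 * v x - 4 * h x * exp (v x / 2)) unitCircle := fun x hx ↦ by
    simp only [huv (unitCircle_subset_closedUnitDisk hx)]
  rw [Ifun, Ifun, setIntegral_congr_fun isOpen_unitDisk.measurableSet interior_eq,
    bint_congr boundary_eq]

/-- The ridge `x ↦ 1 / (1 + δ - ⟪x₀, x⟫)`, which is smooth on the closed disk for `δ > 0` and
concentrates at the boundary point `x₀` as `δ → 0`. -/
def ridge (x₀ : ℂ) (δ : ℝ) (x : ℂ) : ℝ := (1 + δ - inner ℝ x₀ x)⁻¹

/-- The test function `2 log (α w)` built on the ridge `w`. It satisfies `|∇u|² = 4 w²`,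
`exp u = α² w²` and `exp (u / 2) = α w`, so that all terms of the energy except the logarithm
are multiples of powers of `w`. -/
def bubble (α : ℝ) (x₀ : ℂ) (δ : ℝ) (x : ℂ) : ℝ := 2 * log (α * ridge x₀ δ x)

section Ridge

variable {x₀ x : ℂ} {δ α : ℝ}

lemma inner_le_one_of_mem_closedUnitDisk (hx₀ : x₀ ∈ unitCircle) (hx : x ∈ closedUnitDisk) :
    inner ℝ x₀ x ≤ 1 := by
  have norm_le := mem_closedBall_zero_iff.1 hx
  simpa [mem_sphere_zero_iff_norm.1 hx₀] using
    (real_inner_le_norm x₀ x).trans (mul_le_mul_of_nonneg_left norm_le (norm_nonneg x₀))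

lemma ridge_denom_pos (hx₀ : x₀ ∈ unitCircle) (hx : x ∈ Metric.ball 0 (1 + δ)) :
    0 < 1 + δ - inner ℝ x₀ x := by
  have inner_le := real_inner_le_norm x₀ x
  rw [mem_sphere_zero_iff_norm.1 hx₀, one_mul] at inner_le
  linarith [mem_ball_zero_iff.1 hx]

lemma closedUnitDisk_subset_ball_one_add (hδ : 0 < δ) :
    closedUnitDisk ⊆ Metric.ball 0 (1 + δ) :=
  Metric.closedBall_subset_ball (by linarith)

lemma ridge_pos (hx₀ : x₀ ∈ unitCircle) (hδ : 0 < δ) (hx : x ∈ closedUnitDisk) :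
    0 < ridge x₀ δ x :=
  inv_pos.2 (ridge_denom_pos hx₀ (closedUnitDisk_subset_ball_one_add hδ hx))

lemma contDiffOn_ridge {n : WithTop ℕ∞} (hx₀ : x₀ ∈ unitCircle) :
    ContDiffOn ℝ n (ridge x₀ δ) (Metric.ball 0 (1 + δ)) :=
  ContDiffOn.inv (contDiffOn_const.sub (contDiffOn_const.inner ℝ contDiffOn_id))
    fun _ hx ↦ (ridge_denom_pos hx₀ hx).ne'

lemma continuousOn_ridge (hx₀ : x₀ ∈ unitCircle) (hδ : 0 < δ) :
    ContinuousOn (ridge x₀ δ) closedUnitDisk :=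
  (contDiffOn_ridge (n := 0) hx₀).continuousOn.mono (closedUnitDisk_subset_ball_one_add hδ)

lemma hasFDerivAt_ridge (hx₀ : x₀ ∈ unitCircle) (hx : x ∈ Metric.ball 0 (1 + δ)) :
    HasFDerivAt (ridge x₀ δ) (ridge x₀ δ x ^ 2 • innerSL ℝ x₀) x := by
  have denom : HasFDerivAt (fun x ↦ 1 + δ - inner ℝ x₀ x) (-innerSL ℝ x₀) x :=
    (innerSL ℝ x₀).hasFDerivAt.const_sub (1 + δ)
  refine ((hasDerivAt_inv (ridge_denom_pos hx₀ hx).ne').comp_hasFDerivAt x denom).congr_fderiv ?_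
  rw [ridge, inv_pow, neg_smul_neg]

lemma pd_ridge (hx₀ : x₀ ∈ unitCircle) (hx : x ∈ Metric.ball 0 (1 + δ)) (a : ℂ) :
    pd (ridge x₀ δ) a x = inner ℝ x₀ a * ridge x₀ δ x ^ 2 := by
  rw [pd, (hasFDerivAt_ridge hx₀ hx).fderiv, mul_comm]
  rfl

lemma re_sq_add_im_sq_of_mem_unitCircle (hx : x ∈ unitCircle) : x.re ^ 2 + x.im ^ 2 = 1 := by
  rw [← Complex.normSq_add_mul_I, Complex.re_add_im, Complex.normSq_eq_norm_sq,
    mem_sphere_zero_iff_norm.1 hx, one_pow]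

-- With `w` the ridge, the field `w x₀` has divergence `w²` and normal component `⟪x₀, x⟫ w ≤ w`.
theorem integral_ridge_sq_le (hx₀ : x₀ ∈ unitCircle) (hδ : 0 < δ) :
    ∫ x in unitDisk, ridge x₀ δ x ^ 2 ≤ bint (ridge x₀ δ) := by
  obtain ⟨w, hw, hw_eq⟩ := exists_contDiff_eqOn_closedBall (n := 1) one_pos
    (by linarith : 1 < 1 + δ) (contDiffOn_ridge hx₀)
  have hw_differentiable := hw.differentiable one_ne_zero
  have divergence_eq : Set.EqOn (fun x ↦ ridge x₀ δ x ^ 2)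
      (fun x ↦ pd (fun x ↦ x₀.re * w x) 1 x + pd (fun x ↦ x₀.im * w x) Complex.I x) unitDisk := by
    intro x hx
    have hx_ball := closedUnitDisk_subset_ball_one_add hδ (unitDisk_subset_closedUnitDisk hx)
    have pd_w (a : ℂ) : pd w a x = inner ℝ x₀ a * ridge x₀ δ x ^ 2 :=
      (pd_congr hw_eq a hx).trans (pd_ridge hx₀ hx_ball a)
    simp only [pd_const_mul (hw_differentiable x), pd_w, Complex.inner, Complex.mul_re,
      Complex.conj_re, Complex.conj_im, Complex.one_re, Complex.one_im, Complex.I_re, Complex.I_im]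
    linear_combination -ridge x₀ δ x ^ 2 * re_sq_add_im_sq_of_mem_unitCircle hx₀
  have hw_continuous := hw.continuous
  rw [setIntegral_congr_fun isOpen_unitDisk.measurableSet divergence_eq,
    integral_divergence_unitDisk (by fun_prop) (by fun_prop)]
  refine bint_mono (by fun_prop)
    ((continuousOn_ridge hx₀ hδ).mono unitCircle_subset_closedUnitDisk) fun x hx ↦ ?_
  have hx_disk := unitCircle_subset_closedUnitDisk hx
  calc x.re * (x₀.re * w x) + x.im * (x₀.im * w x) = inner ℝ x₀ x * ridge x₀ δ x := by
        rw [hw_eq hx_disk]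
        simp only [Complex.inner, Complex.mul_re, Complex.conj_re, Complex.conj_im]
        ring
    _ ≤ ridge x₀ δ x := mul_le_of_le_one_left (ridge_pos hx₀ hδ hx_disk).le
        (inner_le_one_of_mem_closedUnitDisk hx₀ hx_disk)

lemma exp_half_bubble (hα : 0 < α) (hx₀ : x₀ ∈ unitCircle) (hδ : 0 < δ)
    (hx : x ∈ closedUnitDisk) : exp (bubble α x₀ δ x / 2) = α * ridge x₀ δ x := by
  rw [bubble, mul_div_cancel_left₀ _ two_ne_zero, exp_log (mul_pos hα (ridge_pos hx₀ hδ hx))]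

lemma exp_bubble (hα : 0 < α) (hx₀ : x₀ ∈ unitCircle) (hδ : 0 < δ) (hx : x ∈ closedUnitDisk) :
    exp (bubble α x₀ δ x) = α ^ 2 * ridge x₀ δ x ^ 2 := by
  rw [← mul_pow, ← exp_half_bubble hα hx₀ hδ hx, ← exp_nat_mul, Nat.cast_ofNat,
    mul_div_cancel₀ _ two_ne_zero]

lemma gradSq_bubble (hα : 0 < α) (hx₀ : x₀ ∈ unitCircle) (hδ : 0 < δ) (hx : x ∈ closedUnitDisk) :
    gradSq (bubble α x₀ δ) x = 4 * ridge x₀ δ x ^ 2 := by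
  have ridge_ne := (ridge_pos hx₀ hδ hx).ne'
  have hasFDerivAt := (((hasFDerivAt_ridge hx₀ (closedUnitDisk_subset_ball_one_add hδ hx)).const_mul
    α).log (mul_ne_zero hα.ne' ridge_ne)).const_mul 2
  have pd_bubble (a : ℂ) : pd (bubble α x₀ δ) a x = 2 * ridge x₀ δ x * inner ℝ x₀ a := by
    have fderiv_eq : pd (bubble α x₀ δ) a x =
        2 * ((α * ridge x₀ δ x)⁻¹ * (α * (ridge x₀ δ x ^ 2 * inner ℝ x₀ a))) := by
      unfold pd
      exact congrArg (· a) hasFDerivAt.fderiv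
    rw [fderiv_eq]
    field_simp
  simp only [gradSq, pd_bubble, Complex.inner, Complex.mul_re, Complex.conj_re, Complex.conj_im,
    Complex.one_re, Complex.one_im, Complex.I_re, Complex.I_im]
  linear_combination 4 * ridge x₀ δ x ^ 2 * re_sq_add_im_sq_of_mem_unitCircle hx₀

lemma contDiffOn_bubble {n : WithTop ℕ∞} (hα : 0 < α) (hx₀ : x₀ ∈ unitCircle) :
    ContDiffOn ℝ n (bubble α x₀ δ) (Metric.ball 0 (1 + δ)) :=
  contDiffOn_const.mul <| (contDiffOn_const.mul (contDiffOn_ridge hx₀)).log fun _ hx ↦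
    (mul_pos hα (inv_pos.2 (ridge_denom_pos hx₀ hx))).ne'

end Ridge

section Asymptotics

variable {x₀ : ℂ}

lemma inner_bpt_bpt (s t : ℝ) : inner ℝ (bpt s) (bpt t) = cos (t - s) := by
  rw [Complex.inner, Complex.mul_re, Complex.conj_re, Complex.conj_im, bpt_re, bpt_re, bpt_im,
    bpt_im, cos_sub]
  ring

lemma inv_two_mul_sqrt_le_bint_ridge (hx₀ : x₀ ∈ unitCircle) {δ : ℝ} (hδ : 0 < δ)
    (hδ_one : δ ≤ 1) : (2 * √δ)⁻¹ ≤ bint (ridge x₀ δ) := by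
  have sqrt_pos : 0 < √δ := sqrt_pos.2 hδ
  have sqrt_le : √δ ≤ 2 * π := by linarith [sqrt_le_one.2 hδ_one, pi_gt_three]
  have hcontinuous : Continuous fun θ ↦ ridge x₀ δ (bpt θ) := continuous_comp_bpt
    ((continuousOn_ridge hx₀ hδ).mono unitCircle_subset_closedUnitDisk)
  have ridge_ge (θ : ℝ) (hθ : θ ∈ Set.Icc x₀.arg (x₀.arg + √δ)) :
      (2 * δ)⁻¹ ≤ ridge x₀ δ (bpt θ) := by
    have inner_eq : inner ℝ x₀ (bpt θ) = cos (θ - x₀.arg) := by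
      rw [← inner_bpt_bpt, bpt_arg hx₀]
    have angle_sq_le : (θ - x₀.arg) ^ 2 ≤ δ := by
      rw [← sq_sqrt hδ.le]
      exact pow_le_pow_left₀ (by linarith [hθ.1]) (by linarith [hθ.2]) 2
    have cos_ge := one_sub_sq_div_two_le_cos (x := θ - x₀.arg)
    have cos_le := cos_le_one (θ - x₀.arg)
    rw [ridge, inner_eq]
    exact inv_anti₀ (by linarith) (by linarith)
  calc (2 * √δ)⁻¹ = ∫ _ in x₀.arg..x₀.arg + √δ, (2 * δ)⁻¹ := by
        rw [intervalIntegral.integral_const, add_sub_cancel_left, smul_eq_mul]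
        field_simp
        rw [sq_sqrt hδ.le]
    _ ≤ ∫ θ in x₀.arg..x₀.arg + √δ, ridge x₀ δ (bpt θ) :=
        intervalIntegral.integral_mono_on (by linarith) (by simp)
          (hcontinuous.intervalIntegrable _ _) ridge_ge
    _ ≤ ∫ θ in x₀.arg..x₀.arg + 2 * π, ridge x₀ δ (bpt θ) :=
        intervalIntegral.integral_mono_interval le_rfl (by linarith) (by linarith)
          (Eventually.of_forall fun θ ↦ (ridge_pos hx₀ hδ
            (unitCircle_subset_closedUnitDisk (bpt_mem_unitCircle θ))).le)
          (hcontinuous.intervalIntegrable _ _)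
    _ = bint (ridge x₀ δ) := (bint_eq_integral_shift _ _).symm

theorem tendsto_bint_ridge (hx₀ : x₀ ∈ unitCircle) :
    Tendsto (fun δ ↦ bint (ridge x₀ δ)) (nhdsWithin 0 (Set.Ioi 0)) atTop := by
  have denom_tendsto : Tendsto (fun δ ↦ 2 * √δ) (nhdsWithin 0 (Set.Ioi 0))
      (nhdsWithin 0 (Set.Ioi 0)) := by
    refine tendsto_nhdsWithin_iff.2 ⟨?_, eventually_nhdsWithin_of_forall fun δ hδ ↦ ?_⟩
    · exact ((continuous_sqrt.const_mul 2).tendsto' 0 0 (by simp)).mono_left nhdsWithin_le_nhds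
    · exact mul_pos two_pos (sqrt_pos.2 hδ)
  refine tendsto_atTop_mono' _ ?_ denom_tendsto.inv_tendsto_nhdsGT_zero
  filter_upwards [Ioo_mem_nhdsGT one_pos] with δ hδ
  exact inv_two_mul_sqrt_le_bint_ridge hx₀ hδ.1 hδ.2.le

lemma ridge_le_of_le_dist {δ r : ℝ} (hx₀ : x₀ ∈ unitCircle) (hδ : 0 < δ) (hr : 0 < r) {x : ℂ}
    (hx : x ∈ closedUnitDisk) (hdist : r ≤ dist x x₀) : ridge x₀ δ x ≤ 2 / r ^ 2 := by
  have dist_sq : dist x x₀ ^ 2 = ‖x‖ ^ 2 - 2 * inner ℝ x₀ x + 1 := by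
    rw [dist_eq_norm, norm_sub_sq_real, mem_sphere_zero_iff_norm.1 hx₀, one_pow,
      real_inner_comm]
  have norm_sq_le : ‖x‖ ^ 2 ≤ 1 := pow_le_one₀ (norm_nonneg x) (mem_closedBall_zero_iff.1 hx)
  have sq_le : r ^ 2 ≤ dist x x₀ ^ 2 := pow_le_pow_left₀ hr.le hdist 2
  rw [ridge, ← inv_div]
  exact inv_anti₀ (by positivity) (by linarith)

-- Away from `x₀` the ridges are bounded uniformly in `δ`.
theorem exists_abs_sub_mul_ridge_pow_le {f : ℂ → ℝ} {S : Set ℂ} (hS : IsCompact S)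
    (hS_subset : S ⊆ closedUnitDisk) (hf : ContinuousOn f S) (hx₀ : x₀ ∈ unitCircle)
    (hx₀S : x₀ ∈ S) (p : ℕ) {η : ℝ} (hη : 0 < η) :
    ∃ M, ∀ δ > 0, ∀ x ∈ S, |f x - f x₀| * ridge x₀ δ x ^ p ≤ η * ridge x₀ δ x ^ p + M := by
  obtain ⟨r, r_pos, f_close⟩ := Metric.continuousOn_iff.1 hf x₀ hx₀S η hη
  obtain ⟨C, f_bound⟩ := hS.exists_bound_of_continuousOn
    (f := fun x ↦ f x - f x₀) (by fun_prop)
  have C_nonneg : 0 ≤ C := (norm_nonneg _).trans (f_bound x₀ hx₀S)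
  refine ⟨C * (2 / r ^ 2) ^ p, fun δ hδ x hx ↦ ?_⟩
  have hpos := ridge_pos hx₀ hδ (hS_subset hx)
  rcases lt_or_ge (dist x x₀) r with near | far
  · have close := (f_close x hx near).le
    rw [dist_eq] at close
    have : |f x - f x₀| * ridge x₀ δ x ^ p ≤ η * ridge x₀ δ x ^ p := by gcongr
    have : 0 ≤ C * (2 / r ^ 2) ^ p := by positivity
    linarith
  · have ridge_le := ridge_le_of_le_dist hx₀ hδ r_pos (hS_subset hx) far
    have : |f x - f x₀| * ridge x₀ δ x ^ p ≤ C * (2 / r ^ 2) ^ p := by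
      gcongr
      exact f_bound x hx
    have : 0 ≤ η * ridge x₀ δ x ^ p := by positivity
    linarith

end Asymptotics

section BubbleEnergy

variable {K h : ℂ → ℝ} {x₀ : ℂ} {α η : ℝ}

lemma exists_interior_energy_bubble_le (hK : ContinuousOn K closedUnitDisk)
    (hx₀ : x₀ ∈ unitCircle) (hK₀ : K x₀ ≤ 0) (hα : 0 < α) (hη : 0 < η) :
    ∃ M, ∀ δ > 0, ∫ x in unitDisk,
      ((1 / 2) * gradSq (bubble α x₀ δ) x - 2 * K x * exp (bubble α x₀ δ x)) ≤
        (2 + 2 * α ^ 2 * (-K x₀ + η)) * bint (ridge x₀ δ) + M := by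
  obtain ⟨M, localization⟩ := exists_abs_sub_mul_ridge_pow_le isCompact_closedUnitDisk subset_rfl
    hK hx₀ (unitCircle_subset_closedUnitDisk hx₀) 2 hη
  refine ⟨∫ _ in unitDisk, 2 * α ^ 2 * M, fun δ hδ ↦ ?_⟩
  have hridge := continuousOn_ridge hx₀ hδ
  have energy_eq : Set.EqOn
      (fun x ↦ (1 / 2) * gradSq (bubble α x₀ δ) x - 2 * K x * exp (bubble α x₀ δ x))
      (fun x ↦ 2 * ridge x₀ δ x ^ 2 - 2 * K x * (α ^ 2 * ridge x₀ δ x ^ 2)) unitDisk := by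
    intro x hx
    have hx_closed := unitDisk_subset_closedUnitDisk hx
    simp only [gradSq_bubble hα hx₀ hδ hx_closed, exp_bubble hα hx₀ hδ hx_closed]
    ring
  rw [setIntegral_congr_fun isOpen_unitDisk.measurableSet energy_eq]
  calc ∫ x in unitDisk, (2 * ridge x₀ δ x ^ 2 - 2 * K x * (α ^ 2 * ridge x₀ δ x ^ 2)) ≤
        ∫ x in unitDisk, ((2 + 2 * α ^ 2 * (-K x₀ + η)) * ridge x₀ δ x ^ 2 + 2 * α ^ 2 * M) := by
        refine setIntegral_mono_on (integrableOn_unitDisk (by fun_prop))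
          (integrableOn_unitDisk (by fun_prop)) isOpen_unitDisk.measurableSet fun x hx ↦ ?_
        have localized := localization δ hδ x (unitDisk_subset_closedUnitDisk hx)
        have freeze_K := mul_le_mul_of_nonneg_right (neg_abs_le (K x - K x₀))
          (sq_nonneg (ridge x₀ δ x))
        have scaled := mul_le_mul_of_nonneg_left
          (by linarith : -K x * ridge x₀ δ x ^ 2 ≤ (-K x₀ + η) * ridge x₀ δ x ^ 2 + M)
          (by positivity : 0 ≤ 2 * α ^ 2)
        linarith
    _ = (2 + 2 * α ^ 2 * (-K x₀ + η)) * (∫ x in unitDisk, ridge x₀ δ x ^ 2) +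
        ∫ _ in unitDisk, 2 * α ^ 2 * M := by
        rw [integral_add (integrableOn_unitDisk (by fun_prop))
          (integrableOn_unitDisk (by fun_prop)), integral_const_mul]
    _ ≤ _ := by
        gcongr
        · have : 0 ≤ -K x₀ + η := by linarith
          positivity
        · exact integral_ridge_sq_le hx₀ hδ

lemma log_le_mul_sub_one_sub_log {y : ℝ} (hη : 0 < η) (hy : 0 < y) :
    log y ≤ η * y - 1 - log η := by
  have log_le := log_le_sub_one_of_pos (mul_pos hη hy)
  rw [log_mul hη.ne' hy.ne'] at log_le
  linarith

lemma exists_boundary_energy_bubble_le (hh : ContinuousOn h unitCircle) (hx₀ : x₀ ∈ unitCircle)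
    (hα : 0 < α) (hη : 0 < η) :
    ∃ M, ∀ δ > 0, bint (fun x ↦ 2 * bubble α x₀ δ x - 4 * h x * exp (bubble α x₀ δ x / 2)) ≤
      -(4 * α * (h x₀ - 2 * η)) * bint (ridge x₀ δ) + M := by
  obtain ⟨M, localization⟩ := exists_abs_sub_mul_ridge_pow_le isCompact_unitCircle
    unitCircle_subset_closedUnitDisk hh hx₀ hx₀ 1 hη
  refine ⟨2 * π * (4 * α * M - 4 * (1 + log η)), fun δ hδ ↦ ?_⟩
  have hridge := (continuousOn_ridge hx₀ hδ).mono unitCircle_subset_closedUnitDisk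
  have hbubble : ContinuousOn (bubble α x₀ δ) unitCircle :=
    (contDiffOn_bubble (n := 0) hα hx₀).continuousOn.mono
      (unitCircle_subset_closedUnitDisk.trans (closedUnitDisk_subset_ball_one_add hδ))
  rw [← bint_const_mul, ← bint_const, ← bint_add (by fun_prop) (by fun_prop)]
  refine bint_mono (by fun_prop) (by fun_prop) fun x hx ↦ ?_
  have hx_disk := unitCircle_subset_closedUnitDisk hx
  have hpos := ridge_pos hx₀ hδ hx_disk
  have localized := localization δ hδ x hx
  rw [pow_one] at localized
  have freeze_h := mul_le_mul_of_nonneg_right (neg_abs_le (h x - h x₀)) hpos.le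
  have scaled := mul_le_mul_of_nonneg_left
    (by linarith : -h x * ridge x₀ δ x ≤ -(h x₀ - η) * ridge x₀ δ x + M)
    (by positivity : 0 ≤ 4 * α)
  have log_le := log_le_mul_sub_one_sub_log hη (mul_pos hα hpos)
  rw [exp_half_bubble hα hx₀ hδ hx_disk, bubble]
  linarith

theorem exists_Ifun_bubble_le (hK : ContinuousOn K closedUnitDisk) (hh : ContinuousOn h unitCircle)
    (hx₀ : x₀ ∈ unitCircle) (hK₀ : K x₀ ≤ 0) (hα : 0 < α) (hη : 0 < η) :
    ∃ M, ∀ δ > 0, Ifun K h (bubble α x₀ δ) ≤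
      (2 + 2 * α ^ 2 * (-K x₀ + η) - 4 * α * (h x₀ - 2 * η)) * bint (ridge x₀ δ) + M := by
  obtain ⟨M, interior_le⟩ := exists_interior_energy_bubble_le hK hx₀ hK₀ hα hη
  obtain ⟨N, boundary_le⟩ := exists_boundary_energy_bubble_le hh hx₀ hα hη
  refine ⟨M + N, fun δ hδ ↦ ?_⟩
  rw [Ifun]
  linarith [interior_le δ hδ, boundary_le δ hδ]

-- At `η = 0` and `α = 1 / h x₀` the leading coefficient is `2 (-K x₀ / h x₀ ^ 2 - 1) < 0`.
theorem exists_tendsto_Ifun_bubble (hK : ContinuousOn K closedUnitDisk)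
    (hh : ContinuousOn h unitCircle) (hx₀ : x₀ ∈ unitCircle) (hK₀ : K x₀ ≤ 0)
    (hKh : √(-K x₀) < h x₀) :
    ∃ α > 0, Tendsto (fun δ ↦ Ifun K h (bubble α x₀ δ)) (nhdsWithin 0 (Set.Ioi 0)) atBot := by
  have h_pos : 0 < h x₀ := (sqrt_nonneg _).trans_lt hKh
  have ratio_lt : -K x₀ / h x₀ ^ 2 < 1 := (div_lt_one (by positivity)).2 ((sqrt_lt' h_pos).1 hKh)
  have coefficient_tendsto : Tendsto
      (fun η ↦ 2 + 2 * (h x₀)⁻¹ ^ 2 * (-K x₀ + η) - 4 * (h x₀)⁻¹ * (h x₀ - 2 * η))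
      (nhdsWithin 0 (Set.Ioi 0)) (nhds (2 * (-K x₀ / h x₀ ^ 2 - 1))) := by
    refine Tendsto.mono_left (Continuous.tendsto' (by fun_prop) _ _ ?_) nhdsWithin_le_nhds
    field_simp
    ring
  obtain ⟨η, coefficient_neg, hη⟩ := ((coefficient_tendsto.eventually_lt_const
    (by linarith : 2 * (-K x₀ / h x₀ ^ 2 - 1) < 0)).and self_mem_nhdsWithin).exists
  obtain ⟨M, Ifun_le⟩ := exists_Ifun_bubble_le hK hh hx₀ hK₀ (inv_pos.2 h_pos) hη
  refine ⟨(h x₀)⁻¹, inv_pos.2 h_pos, tendsto_atBot_mono' _ ?_ <| tendsto_atBot_add_const_right _ M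
    ((tendsto_bint_ridge hx₀).const_mul_atTop_of_neg coefficient_neg)⟩
  exact eventually_nhdsWithin_of_forall Ifun_le

theorem exists_one_lt_bint_exp_half_Ifun_lt (hK : ContinuousOn K closedUnitDisk)
    (hh : ContinuousOn h unitCircle) (hx₀ : x₀ ∈ unitCircle) (hK₀ : K x₀ ≤ 0)
    (hKh : √(-K x₀) < h x₀) (A : ℝ) :
    ∃ u : ℂ → ℝ, ContDiff ℝ 1 u ∧ 1 < bint (fun x ↦ exp (u x / 2)) ∧ Ifun K h u < A := by
  obtain ⟨α, hα, Ifun_tendsto⟩ := exists_tendsto_Ifun_bubble hK hh hx₀ hK₀ hKh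
  obtain ⟨δ, Ifun_lt, bint_gt, hδ⟩ := ((Ifun_tendsto.eventually_lt_atBot A).and
    (((tendsto_bint_ridge hx₀).const_mul_atTop hα).eventually_gt_atTop 1 |>.and
      self_mem_nhdsWithin)).exists
  obtain ⟨u, hu, hu_eq⟩ := exists_contDiff_eqOn_closedBall (n := 1) one_pos
    (lt_add_of_pos_right 1 hδ) (contDiffOn_bubble hα hx₀)
  refine ⟨u, hu, ?_, (Ifun_congr K h hu_eq).trans_lt Ifun_lt⟩
  rw [← bint_const_mul] at bint_gt
  refine bint_gt.trans_eq (bint_congr fun x hx ↦ ?_)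
  have hx_disk := unitCircle_subset_closedUnitDisk hx
  simp only [hu_eq hx_disk, exp_half_bubble hα hx₀ hδ hx_disk]

end BubbleEnergy

/-! ### Mountain-pass geometry -/

section Perturbation

variable {K h u : ℂ → ℝ} {c ε : ℝ}

lemma div_one_add_le_Ieps (hε : 0 ≤ ε) (hc : c ≤ Ifun K h u) : c / (1 + ε) ≤ Ieps K h ε u := by
  have := mul_nonneg hε (Tfun_nonneg u)
  exact div_le_div_of_nonneg_right (by linarith) (by linarith)

lemma eventually_Ieps_lt_div_one_add (hc : Ifun K h u < c) :
    ∀ᶠ ε in nhdsWithin 0 (Set.Ioi 0), Ieps K h ε u < c / (1 + ε) := by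
  have numerator_tendsto : Tendsto (fun ε ↦ Ifun K h u + ε * Tfun u) (nhdsWithin 0 (Set.Ioi 0))
      (nhds (Ifun K h u)) :=
    (Continuous.tendsto' (by fun_prop) 0 _ (by simp)).mono_left nhdsWithin_le_nhds
  filter_upwards [numerator_tendsto.eventually_lt_const hc, self_mem_nhdsWithin]
    with ε numerator_lt ε_pos
  exact div_lt_div_of_pos_right numerator_lt (add_pos one_pos ε_pos)

end Perturbation

theorem mountain_pass_geometry_general {K h : ℂ → ℝ} (hK : ContinuousOn K closedUnitDisk)
    (hK_nonpos : ∀ x ∈ closedUnitDisk, K x ≤ 0) (hh : ContinuousOn h unitCircle)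
    (hKh : ∃ x₀ ∈ unitCircle, √(-K x₀) < h x₀) :
    ∃ ε₀ > (0 : ℝ), ∀ ε ∈ Set.Ioo 0 ε₀, ∃ u₀ u₁ : ℂ → ℝ, ContDiff ℝ 1 u₀ ∧ ContDiff ℝ 1 u₁ ∧
      bint (fun x ↦ exp (u₀ x / 2)) < 1 ∧ 1 < bint (fun x ↦ exp (u₁ x / 2)) ∧
      ∃ c : ℝ, max (Ieps K h ε u₀) (Ieps K h ε u₁) < c ∧
        ∀ u : ℂ → ℝ, ContDiff ℝ 1 u → bint (fun x ↦ exp (u x / 2)) = 1 → c ≤ Ieps K h ε u := by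
  obtain ⟨x₀, hx₀, hKh₀⟩ := hKh
  obtain ⟨H, hH⟩ := isCompact_unitCircle.bddAbove_image hh
  have constraint_bound (u : ℂ → ℝ) :=
    le_Ifun_of_bint_exp_half_eq_one hK hK_nonpos hh (fun x hx ↦ hH ⟨x, hx, rfl⟩) (u := u)
  set C := -(8 * π * log (2 * π) + 4 * H)
  obtain ⟨u₀, hu₀, bint_u₀, Ifun_u₀⟩ := exists_bint_exp_half_lt_one_Ifun_lt K hh C
  obtain ⟨u₁, hu₁, bint_u₁, Ifun_u₁⟩ := exists_one_lt_bint_exp_half_Ifun_lt hK hh hx₀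
    (hK_nonpos x₀ (unitCircle_subset_closedUnitDisk hx₀)) hKh₀ C
  obtain ⟨ε₀, hε₀, endpoints_lt⟩ := mem_nhdsGT_iff_exists_Ioo_subset.1
    ((eventually_Ieps_lt_div_one_add Ifun_u₀).and (eventually_Ieps_lt_div_one_add Ifun_u₁))
  refine ⟨ε₀, hε₀, fun ε hε ↦ ⟨u₀, u₁, hu₀, hu₁, bint_u₀, bint_u₁, C / (1 + ε),
    max_lt (endpoints_lt hε).1 (endpoints_lt hε).2, fun u hu hu_constraint ↦ ?_⟩⟩
  exact div_one_add_le_Ieps hε.1.le (constraint_bound u hu hu_constraint)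

/-- Proposition: mountain-pass geometry of I_ε for small ε > 0. -/
theorem mountain_pass_geometry
    (K h : ℂ → ℝ)
    (hK : ContDiff ℝ 2 K)
    (hKneg : ∀ x ∈ closedUnitDisk, K x < 0)
    (hh : ContDiff ℝ 2 (fun θ => h (bpt θ)))
    (hx0 : ∃ x₀ ∈ unitCircle, Real.sqrt (-K x₀) < h x₀) :
    ∃ ε₀ > (0:ℝ), ∀ ε ∈ Set.Ioo 0 ε₀, ∃ u₀ u₁ : ℂ → ℝ,
      ContDiff ℝ 1 u₀ ∧ ContDiff ℝ 1 u₁ ∧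
      bint (fun x => Real.exp (u₀ x / 2)) < 1 ∧
      1 < bint (fun x => Real.exp (u₁ x / 2)) ∧
      -- max{I_ε(u₀), I_ε(u₁)} < inf{ I_ε(u) : ∫_{∂𝔻} e^{u/2} = 1 }
      ∃ c : ℝ, max (Ieps K h ε u₀) (Ieps K h ε u₁) < c ∧
        ∀ u : ℂ → ℝ, ContDiff ℝ 1 u → bint (fun x => Real.exp (u x / 2)) = 1 →
          c ≤ Ieps K h ε u :=
  mountain_pass_geometry_general hK.continuous.continuousOn (fun x hx ↦ (hKneg x hx).le)
    (continuousOn_unitCircle_of_comp_bpt hh.continuous) hx0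

end
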